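/- Every cactoid is simply connected and locally simply connected. -/

import Mathlib

open Metric Set

/-- A Jordan curve: a subset homeomorphic to the circle. -/
def IsJordanCurve {X : Type} [TopologicalSpace X] (J : Set X) : Prop :=
  Nonempty (AddCircle (1 : ℝ) ≃ₜ J)

/-- A set is cyclicly connected if every pair of its points lies on a Jordan curve in it. -/
def CyclicallyConnected {X : Type} [TopologicalSpace X] (C : Set X) : Prop :=
  ∀ x ∈ C, ∀ y ∈ C, ∃ J : Set X, J ⊆ C ∧ IsJordanCurve J ∧ x ∈ J ∧ y ∈ J

/-- A maximal cyclic subset: non-degenerate, cyclicly connected, and not a proper subset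
of any cyclicly connected subset. -/
def MaximalCyclic {X : Type} [TopologicalSpace X] (T : Set X) : Prop :=
  ¬ T.Subsingleton ∧ CyclicallyConnected T ∧
    ∀ C : Set X, CyclicallyConnected C → T ⊆ C → C = T
/-- Locally simply connected: every point has arbitrarily small simply connected
open neighborhoods. -/
def LocSimplyConnected (X : Type) [TopologicalSpace X] : Prop :=
  ∀ x : X, ∀ U ∈ nhds x, ∃ V ∈ nhds x, V ⊆ U ∧ IsOpen V ∧ SimplyConnectedSpace ↥V

/-- Homeomorphic to the 2-sphere. -/
def IsTopological2Sphere (T : Type) [TopologicalSpace T] : Prop :=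
  Nonempty (T ≃ₜ Metric.sphere (0 : EuclideanSpace ℝ (Fin 3)) 1)

/-!
Extend a loop to a map `f` on the real line and take a maximal set of pairwise non-crossing chords,
that is, of pairs `c ≤ d` in `[0, 1]` with `f c = f d`. Mapping `(s, t)` to the value of `f` on the
longest chord over `t` of length at most `s` contracts the loop as `s` grows from `0` to `1`, except
that it jumps over open boxes, the gaps of the lamination. The loop at the bottom of a gap takes, by
maximality, no value twice except at its endpoints and on intervals of constancy. If it is not
constant, its image is a Jordan curve, which lies in a maximal cyclic set, that is, in a sphere,
and can be filled there. These fillings fit together continuously because only finitely many gaps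
have large loops and only finitely many maximal cyclic sets are large.

For the local statement, all connected sets containing `x` enter a given maximal cyclic set `T`
through the same point, the root of `T`. Given an open set `B` containing `x`, cut each `T` that
leaves `B` down to a small disc around its root, or to nothing if the root is outside `B`. In what
is left of `B`, the component of `x` is open and meets every `T` in the disc, all of `T` or nothing.
-/

/-! ### Small paths in compact locally connected spaces -/

section MetricChain

open Filter Topology

/-- A finite chain from `x` to `y` with steps shorter than `η`, encoded as the sequence that takes
the value `y` from the index `M` on. -/
structure IsMetricChain {X : Type*} [PseudoMetricSpace X] (η : ℝ) (x y : X) (M : ℕ)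
    (p : ℕ → X) : Prop where
  source : p 0 = x
  target : ∀ k, M ≤ k → p k = y
  dist_lt : ∀ k, dist (p k) (p (k + 1)) < η

namespace IsMetricChain

variable {X : Type*} [PseudoMetricSpace X] {ε δ η : ℝ} {x y z : X} {M N : ℕ} {p q : ℕ → X}

theorem mono (h : IsMetricChain η x y M p) (hMN : M ≤ N) : IsMetricChain η x y N p :=
  ⟨h.source, fun k hk => h.target k (hMN.trans hk), h.dist_lt⟩

theorem const (hη : 0 < η) (x : X) (M : ℕ) : IsMetricChain η x x M fun _ => x :=
  ⟨rfl, fun _ _ => rfl, fun _ => by rwa [dist_self]⟩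

theorem pair (hη : 0 < η) (hxy : dist x y < η) :
    IsMetricChain η x y 1 fun j => if j = 0 then x else y where
  source := if_pos rfl
  target k hk := if_neg (Nat.one_le_iff_ne_zero.1 hk)
  dist_lt k := by by_cases hk : k = 0 <;> simp [hk, hxy, hη]

theorem append (hp : IsMetricChain η x y M p) (hq : IsMetricChain η y z N q) :
    IsMetricChain η x z (M + N) fun j => if j < M then p j else q (j - M) where
  source := by
    rcases Nat.eq_zero_or_pos M with rfl | hM
    · simpa [hq.source] using (hp.target 0 le_rfl).symm.trans hp.source
    · simpa [hM] using hp.source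
  target k hk := by
    simpa [show ¬ k < M by omega] using hq.target _ (by omega)
  dist_lt k := by
    rcases lt_trichotomy (k + 1) M with h | h | h
    · simpa [h, show k < M by omega] using hp.dist_lt k
    · have hy : p (k + 1) = q 0 := (hp.target _ h.ge).trans hq.source.symm
      simpa [show k < M by omega, ← h, ← hy] using hp.dist_lt k
    · simpa [show ¬ k < M by omega, show ¬ k + 1 < M by omega,
        show k + 1 - M = k - M + 1 by omega] using hq.dist_lt (k - M)

theorem concat {q : ℕ → ℕ → X} (hM : ∀ k, M ≤ k → ∀ j, q k j = y) (hN : 0 < N)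
    (hp : p 0 = x) (hq : ∀ k, IsMetricChain η (p k) (p (k + 1)) N (q k)) :
    IsMetricChain η x y (M * N) fun i => q (i / N) (i % N) where
  source := by simpa [hp] using (hq 0).source
  target k hk := hM _ ((Nat.le_div_iff_mul_le hN).2 hk) _
  dist_lt k := by
    have hk := Nat.div_add_mod k N
    rcases Nat.lt_or_ge (k % N + 1) N with h | h
    · have hk' : k + 1 = k % N + 1 + N * (k / N) := by omega
      have hdiv : (k + 1) / N = k / N := by
        rw [hk', Nat.add_mul_div_left _ _ hN, Nat.div_eq_of_lt h, zero_add]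
      have hmod : (k + 1) % N = k % N + 1 := by
        rw [hk', Nat.add_mul_mod_self_left, Nat.mod_eq_of_lt h]
      simpa only [hdiv, hmod] using (hq _).dist_lt _
    · have hlt := Nat.mod_lt k hN
      have hk' : k + 1 = N * (k / N + 1) := by rw [mul_add]; omega
      have hdiv : (k + 1) / N = k / N + 1 := by rw [hk', Nat.mul_div_cancel_left _ hN]
      have hmod : (k + 1) % N = 0 := by rw [hk', Nat.mul_mod_right]
      have hend : q (k / N) (k % N + 1) = q (k / N + 1) 0 :=
        ((hq _).target _ h).trans (hq _).source.symm
      simpa only [hdiv, hmod, ← hend] using (hq _).dist_lt _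

theorem exists_of_isPreconnected {S : Set X} (hS : IsPreconnected S) (hη : 0 < η)
    (hx : x ∈ S) (hy : y ∈ S) : ∃ M p, IsMetricChain η x y M p ∧ ∀ j, p j ∈ S := by
  let Joined (x y : X) : Prop :=
    x ∈ S → y ∈ S → ∃ M p, IsMetricChain η x y M p ∧ ∀ j, p j ∈ S
  have joined_of_dist_lt {u v : X} (huv : dist u v < η) : Joined u v := fun hu hv =>
    ⟨1, _, pair hη huv, fun j => by by_cases hj : j = 0 <;> simp [hj, hu, hv]⟩
  refine hS.induction₂' Joined (fun a _ => ?_) (fun a b c _ hb _ hab hbc ha hc => ?_) hx hy hx hy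
  · filter_upwards [mem_nhdsWithin_of_mem_nhds (ball_mem_nhds a hη)] with b hb
    exact ⟨joined_of_dist_lt (mem_ball'.1 hb), joined_of_dist_lt hb⟩
  · obtain ⟨M, p, hp, hpS⟩ := hab ha hb
    obtain ⟨N, q, hq, hqS⟩ := hbc hb hc
    exact ⟨M + N, _, hp.append hq, fun j => by by_cases h : j < M <;> simp [h, hpS, hqS]⟩

theorem exists_refinement (hp : IsMetricChain δ x y M p) (hε : 0 < ε) (hη : 0 < η)
    (hδ : ∀ u v : X, dist u v < δ → ∃ S, IsPreconnected S ∧ u ∈ S ∧ v ∈ S ∧ S ⊆ ball u ε) :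
    ∃ N > 0, ∃ q, IsMetricChain η x y (M * N) q ∧ ∀ k, dist (q k) (p (k / N)) < ε := by
  have hlink : ∀ k, ∃ N q, IsMetricChain η (p k) (p (k + 1)) N q ∧
      (∀ j, dist (q j) (p k) < ε) ∧ (M ≤ k → N = 0 ∧ ∀ j, q j = y) := by
    intro k
    rcases le_or_gt M k with hk | hk
    · rw [hp.target k hk, hp.target (k + 1) (by omega)]
      exact ⟨0, _, const hη y 0, fun _ => by rwa [dist_self], fun _ => ⟨rfl, fun _ => rfl⟩⟩
    · obtain ⟨S, hS, hx, hy, hSε⟩ := hδ _ _ (hp.dist_lt k)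
      obtain ⟨N, q, hq, hqS⟩ := exists_of_isPreconnected hS hη hx hy
      exact ⟨N, q, hq, fun j => hSε (hqS j), fun h => absurd h hk.not_ge⟩
  choose N q hq hqε hqM using hlink
  set B := (Finset.range M).sup N + 1
  have hNB (k : ℕ) : N k ≤ B := by
    rcases le_or_gt M k with hk | hk
    · exact (hqM k hk).1.trans_le (Nat.zero_le _)
    · exact (Finset.le_sup (f := N) (Finset.mem_range.2 hk)).trans (Nat.le_succ _)
  exact ⟨B, Nat.succ_pos _, _,
    concat (fun k hk => (hqM k hk).2) (Nat.succ_pos _) hp.source fun k => (hq k).mono (hNB k),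
    fun k => hqε _ _⟩

theorem dist_floor_lt (hp : IsMetricChain η x y M p) {t t' : ℝ} (ht : 0 ≤ t) (ht' : 0 ≤ t')
    (h : |t - t'| < 1 / M) : dist (p ⌊M * t⌋₊) (p ⌊M * t'⌋₊) < η := by
  wlog htt' : t ≤ t' generalizing t t'
  · rw [dist_comm]
    exact this ht' ht (abs_sub_comm t t' ▸ h) (le_of_not_ge htt')
  have hM : (0 : ℝ) < M := one_div_pos.1 ((abs_nonneg _).trans_lt h)
  have hlt : (t' - t) * M < 1 := by
    rwa [abs_sub_comm, abs_of_nonneg (sub_nonneg.2 htt'), lt_div_iff₀ hM] at h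
  have hle : ⌊(M : ℝ) * t⌋₊ ≤ ⌊(M : ℝ) * t'⌋₊ := Nat.floor_le_floor (by gcongr)
  have hle' : ⌊(M : ℝ) * t'⌋₊ ≤ ⌊(M : ℝ) * t⌋₊ + 1 := by
    rw [← Nat.floor_add_one (by positivity)]
    exact Nat.floor_le_floor (by linarith)
  rcases Nat.le_succ_iff.1 hle' |>.imp_left hle.antisymm with h | h
  · rw [h, dist_self]
    exact dist_nonneg.trans_lt (hp.dist_lt 0)
  · rw [h]
    exact hp.dist_lt _

theorem exists_refining_seq {δ ε : ℕ → ℝ} (hδ : ∀ n, 0 < δ n) (hε : ∀ n, 0 < ε n)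
    (hδε : ∀ n, ∀ u v : X, dist u v < δ n →
      ∃ S, IsPreconnected S ∧ u ∈ S ∧ v ∈ S ∧ S ⊆ ball u (ε n))
    (hM : 0 < M) (hp : IsMetricChain (δ 0) x y M p) :
    ∃ (m : ℕ → ℕ) (P : ℕ → ℕ → X), P 0 = p ∧ (∀ n, 0 < m n) ∧
      (∀ n, IsMetricChain (δ n) x y (m n) (P n)) ∧
      ∀ n, ∃ N > 0, m (n + 1) = m n * N ∧ ∀ k, dist (P (n + 1) k) (P n (k / N)) < ε n := by
  let Stage (n : ℕ) : Type _ :=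
    {s : ℕ × (ℕ → X) // 0 < s.1 ∧ IsMetricChain (δ n) x y s.1 s.2}
  have hnext : ∀ (n : ℕ) (s : Stage n), ∃ s' : Stage (n + 1), ∃ N > 0,
      s'.1.1 = s.1.1 * N ∧ ∀ k, dist (s'.1.2 k) (s.1.2 (k / N)) < ε n := by
    rintro n ⟨⟨m, p⟩, hm, hp⟩
    obtain ⟨N, hN, q, hq, hqp⟩ := hp.exists_refinement (hε n) (hδ (n + 1)) (hδε n)
    exact ⟨⟨⟨m * N, q⟩, Nat.mul_pos hm hN, hq⟩, N, hN, rfl, hqp⟩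
  choose next hnext using hnext
  let stage (n : ℕ) : Stage n := Nat.rec ⟨(M, p), hM, hp⟩ next n
  exact ⟨fun n => (stage n).1.1, fun n => (stage n).1.2, rfl, fun n => (stage n).2.1,
    fun n => (stage n).2.2, fun n => hnext n (stage n)⟩

end IsMetricChain

theorem continuous_of_dist_le {X Y : Type*} [TopologicalSpace Y] [PseudoMetricSpace X]
    {f : ℕ → Y → X} {g : Y → X} {a δ : ℕ → ℝ} (ha : Tendsto a atTop (𝓝 0))
    (hδ : Tendsto δ atTop (𝓝 0)) (hfg : ∀ n t, dist (f n t) (g t) ≤ a n)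
    (hf : ∀ n t, ∀ᶠ t' in 𝓝 t, dist (f n t') (f n t) ≤ δ n) : Continuous g := by
  refine continuous_iff_continuousAt.2 fun t => Metric.tendsto_nhds.2 fun e he => ?_
  have hlim : Tendsto (fun n => a n + δ n + a n) atTop (𝓝 0) := by
    simpa using (ha.add hδ).add ha
  obtain ⟨n, hn⟩ := (hlim.eventually (gt_mem_nhds he)).exists
  filter_upwards [hf n t] with t' ht'
  calc dist (g t') (g t)
      ≤ dist (g t') (f n t') + dist (f n t') (f n t) + dist (f n t) (g t) := dist_triangle4 ..
    _ ≤ a n + δ n + a n := by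
        gcongr
        · exact dist_comm (g t') _ ▸ hfg n t'
        · exact hfg n t
    _ < e := hn

theorem tendsto_div_two_pow (ε : ℝ) : Tendsto (fun n : ℕ => ε / 2 ^ n) atTop (𝓝 0) := by
  simpa [div_eq_mul_inv] using
    (tendsto_pow_atTop_nhds_zero_of_lt_one (r := (1 / 2 : ℝ)) (by norm_num)
      (by norm_num)).const_mul ε

theorem exists_path_of_refining_chains {X : Type*} [MetricSpace X] [CompleteSpace X] {x y : X}
    {ε : ℝ} {M : ℕ → ℕ} {p : ℕ → ℕ → X} {δ : ℕ → ℝ} (hδ : Tendsto δ atTop (𝓝 0))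
    (hM : ∀ n, 0 < M n) (hp : ∀ n, IsMetricChain (δ n) x y (M n) (p n))
    (hs : ∀ n, ∃ N > 0, M (n + 1) = M n * N ∧
      ∀ k, dist (p (n + 1) k) (p n (k / N)) < ε / 2 / 2 ^ n) :
    ∃ γ : Path x y, ∀ t, ∃ k, dist (p 0 k) (γ t) ≤ ε := by
  let f (n : ℕ) (t : unitInterval) : X := p n ⌊M n * (t : ℝ)⌋₊
  have hff (t n) : dist (f n t) (f (n + 1) t) ≤ ε / 2 / 2 ^ n := by
    obtain ⟨N, hN, hMN, hk⟩ := hs n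
    have hfloor : ⌊M n * (t : ℝ)⌋₊ = ⌊M (n + 1) * (t : ℝ)⌋₊ / N := by
      rw [← Nat.floor_div_natCast, hMN, Nat.cast_mul, mul_right_comm,
        mul_div_cancel_right₀ _ (Nat.cast_ne_zero.2 hN.ne')]
    simp only [f, hfloor]
    exact dist_comm (p n _) _ ▸ (hk _).le
  choose g hg using fun t => cauchySeq_tendsto_of_complete (cauchySeq_of_le_geometric_two (hff t))
  have hfg (n t) : dist (f n t) (g t) ≤ ε / 2 ^ n :=
    dist_le_of_le_geometric_two_of_tendsto (hff t) (hg t) n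
  have hosc (n) (t : unitInterval) : ∀ᶠ t' in 𝓝 t, dist (f n t') (f n t) ≤ δ n := by
    have hMn : (0 : ℝ) < M n := Nat.cast_pos.2 (hM n)
    filter_upwards [ball_mem_nhds t (one_div_pos.2 hMn)] with t' ht'
    exact ((hp n).dist_floor_lt t'.2.1 t.2.1 ht').le
  have hg0 : g 0 = x := tendsto_nhds_unique (hg 0) (by simp [f, (hp _).source])
  have hg1 : g 1 = y := tendsto_nhds_unique (hg 1) (by simp [f, (hp _).target _ le_rfl])
  exact ⟨⟨⟨g, continuous_of_dist_le (tendsto_div_two_pow ε) hδ hfg hosc⟩, hg0, hg1⟩,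
    fun t => ⟨_, by simpa [f] using hfg 0 t⟩⟩

section LocallyConnected

variable {X : Type*}

theorem exists_isPreconnected_subset_ball [PseudoMetricSpace X] [CompactSpace X]
    [LocallyConnectedSpace X] {ε : ℝ} (hε : 0 < ε) :
    ∃ δ > 0, ∀ x y : X, dist x y < δ → ∃ S, IsPreconnected S ∧ x ∈ S ∧ y ∈ S ∧ S ⊆ ball x ε := by
  obtain ⟨δ, hδ, h⟩ := lebesgue_number_lemma_of_metric (s := (univ : Set X))
    (c := fun z : X => connectedComponentIn (ball z (ε / 2)) z) isCompact_univ
    (fun z => isOpen_ball.connectedComponentIn)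
    (fun z _ => mem_iUnion.2 ⟨z, mem_connectedComponentIn (mem_ball_self (half_pos hε))⟩)
  refine ⟨δ, hδ, fun x y hxy => ?_⟩
  obtain ⟨z, hz⟩ := h x (mem_univ x)
  refine ⟨_, isPreconnected_connectedComponentIn, hz (mem_ball_self hδ),
    hz (mem_ball'.2 hxy), fun w hw => ?_⟩
  have hwz : w ∈ ball z (ε / 2) := connectedComponentIn_subset _ _ hw
  have hxz : x ∈ ball z (ε / 2) := connectedComponentIn_subset _ _ (hz (mem_ball_self hδ))
  rw [mem_ball] at *
  linarith [dist_triangle_right w x z]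

variable [MetricSpace X] [CompactSpace X] [LocallyConnectedSpace X]

theorem exists_path_dist_lt {ε : ℝ} (hε : 0 < ε) :
    ∃ δ > 0, ∀ x y : X, dist x y < δ → ∃ γ : Path x y, ∀ t, dist (γ t) x < ε := by
  have hulc (n : ℕ) : ∃ δ > 0, δ ≤ ε / 4 / 2 ^ n ∧ ∀ x y : X, dist x y < δ →
      ∃ S, IsPreconnected S ∧ x ∈ S ∧ y ∈ S ∧ S ⊆ ball x (ε / 2 / 2 / 2 ^ n) := by
    obtain ⟨δ, hδ, h⟩ := exists_isPreconnected_subset_ball (X := X)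
      (show 0 < ε / 2 / 2 / 2 ^ n by positivity)
    exact ⟨min δ (ε / 4 / 2 ^ n), by positivity, min_le_right _ _,
      fun x y hxy => h x y (hxy.trans_le (min_le_left _ _))⟩
  choose δ hδ0 hδε hδ using hulc
  refine ⟨δ 0, hδ0 0, fun x y hxy => ?_⟩
  obtain ⟨M, p, hp0, hM, hp, hs⟩ := IsMetricChain.exists_refining_seq hδ0
    (fun n => by positivity) hδ one_pos (IsMetricChain.pair (hδ0 0) hxy)
  obtain ⟨γ, hγ⟩ := exists_path_of_refining_chains
    (squeeze_zero (fun n => (hδ0 n).le) hδε (tendsto_div_two_pow _)) hM hp hs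
  refine ⟨γ, fun t => ?_⟩
  obtain ⟨k, hk⟩ := hγ t
  have hpk : dist (p 0 k) x ≤ ε / 4 := by
    have hδ0ε : δ 0 ≤ ε / 4 := by simpa using hδε 0
    rw [hp0]
    dsimp only
    split_ifs
    · rw [dist_self]; positivity
    · exact (dist_comm x y ▸ hxy.le).trans hδ0ε
  linarith [dist_triangle_left (γ t) x (p 0 k)]

theorem locallyPathConnectedSpace_of_compactSpace (X : Type*) [MetricSpace X] [CompactSpace X]
    [LocallyConnectedSpace X] : LocallyPathConnectedSpace X := by
  rw [locallyPathConnectedSpace_iff_pathComponentIn_mem_nhds]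
  intro x u hu hx
  obtain ⟨ε, hε, hεu⟩ := Metric.isOpen_iff.1 hu x hx
  obtain ⟨δ, hδ, h⟩ := exists_path_dist_lt (X := X) hε
  refine mem_of_superset (ball_mem_nhds x hδ) fun y hy => ?_
  obtain ⟨γ, hγ⟩ := h x y (mem_ball'.1 hy)
  exact ⟨γ, fun t => hεu (hγ t)⟩

end LocallyConnected

end MetricChain

/-! ### Laminations -/

section Lamination

open Filter Topology

/-- A chord of a map `f` on `[0, 1]`: a pair of parameters `c ≤ d` with `f c = f d`. -/
structure IsChord {X : Type*} (f : ℝ → X) (p : ℝ × ℝ) : Prop where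
  nonneg : 0 ≤ p.1
  le : p.1 ≤ p.2
  le_one : p.2 ≤ 1
  map_eq : f p.1 = f p.2

/-- The chord `p` crosses the chord `q` from the left. -/
def Crosses (p q : ℝ × ℝ) : Prop := p.1 < q.1 ∧ q.1 < p.2 ∧ p.2 < q.2

/-- A lamination of a map `f` on `[0, 1]`: a set of pairwise non-crossing chords. -/
structure IsLamination {X : Type*} (f : ℝ → X) (L : Set (ℝ × ℝ)) : Prop where
  isChord : ∀ p ∈ L, IsChord f p
  not_crosses : ∀ p ∈ L, ∀ q ∈ L, ¬ Crosses p q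

/-- A lamination of `f` to which no chord can be added. -/
def IsMaximalLamination {X : Type*} (f : ℝ → X) (L : Set (ℝ × ℝ)) : Prop :=
  Maximal (IsLamination f) L

/-- `p` is a longest chord over the point `t` among the chords in `L` of length at most `s`. -/
structure IsTopChord (L : Set (ℝ × ℝ)) (s t : ℝ) (p : ℝ × ℝ) : Prop where
  mem : p ∈ L
  fst_le : p.1 ≤ t
  le_snd : t ≤ p.2
  length_le : p.2 - p.1 ≤ s
  longest : ∀ q ∈ L, q.1 ≤ t → t ≤ q.2 → q.2 - q.1 ≤ s → q.2 - q.1 ≤ p.2 - p.1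

/-- A choice of a longest chord over `t` among the chords in `L` of length at most `s`. It is
meaningful only if such a chord exists. -/
noncomputable def topChord (L : Set (ℝ × ℝ)) (s t : ℝ) : ℝ × ℝ :=
  Classical.epsilon (IsTopChord L s t)

/-- The map `f` with all chords in `L` of length at most `s` collapsed. -/
noncomputable def collapse {X : Type*} (f : ℝ → X) (L : Set (ℝ × ℝ)) (s t : ℝ) : X :=
  f (topChord L s t).1

/-- The chords in `L` with endpoints in `[a, b]`. -/
def chordsIn (L : Set (ℝ × ℝ)) (a b : ℝ) : Set (ℝ × ℝ) := {q ∈ L | a ≤ q.1 ∧ q.2 ≤ b}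

/-- The lengths of the chords in `L` properly nested in `p`. -/
def nestedLengths (L : Set (ℝ × ℝ)) (p : ℝ × ℝ) : Set ℝ :=
  {r | ∃ q ∈ chordsIn L p.1 p.2, q ≠ p ∧ q.2 - q.1 = r}

/-- The supremum of the lengths of the chords properly nested in `p`. -/
noncomputable def gapDepth (L : Set (ℝ × ℝ)) (p : ℝ × ℝ) : ℝ := sSup (nestedLengths L p)

/-- The open rectangle of those `(s, t)` for which `t` lies under the chord `p` and `s` is between
the lengths of the chords properly nested in `p` and the length of `p`. -/
def gapBox (L : Set (ℝ × ℝ)) (p : ℝ × ℝ) : Set (ℝ × ℝ) :=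
  Ioo (gapDepth L p) (p.2 - p.1) ×ˢ Ioo p.1 p.2

/-- The region of the unit square lying outside all gap boxes. -/
def gapFree (L : Set (ℝ × ℝ)) : Set (ℝ × ℝ) :=
  (Icc 0 1 ×ˢ Icc 0 1) \ ⋃ p ∈ L, gapBox L p

/-- An interval `[a, b]` and a level `m` such that the chords of length at most `m` are separated
by `[a, b]`, and comprise all chords inside `[a, b]` other than `(a, b)`. -/
structure IsGapInterval (L : Set (ℝ × ℝ)) (a b m : ℝ) : Prop where
  nonneg_left : 0 ≤ a
  right_le_one : b ≤ 1
  nonneg_level : 0 ≤ m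
  not_crosses_left : ∀ q ∈ L, ¬ Crosses q (a, b)
  not_crosses_right : ∀ q ∈ L, ¬ Crosses (a, b) q
  length_le : ∀ q ∈ chordsIn L a b, q ≠ (a, b) → q.2 - q.1 ≤ m
  separated : ∀ q ∈ L, q.2 - q.1 ≤ m → q.2 ≤ a ∨ b ≤ q.1 ∨ q ∈ chordsIn L a b

variable {X : Type*} {f : ℝ → X} {L : Set (ℝ × ℝ)} {a b m s t : ℝ} {p q : ℝ × ℝ}

theorem isClosed_setOf_isChord [TopologicalSpace X] [T2Space X] (hf : Continuous f) :
    IsClosed {p | IsChord f p} := by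
  have h : {p | IsChord f p} = {p | 0 ≤ p.1 ∧ p.1 ≤ p.2 ∧ p.2 ≤ 1 ∧ f p.1 = f p.2} :=
    Set.ext fun p => ⟨fun h => ⟨h.1, h.2, h.3, h.4⟩, fun h => ⟨h.1, h.2.1, h.2.2.1, h.2.2.2⟩⟩
  rw [h]
  exact .and (isClosed_le continuous_const continuous_fst)
    (.and (isClosed_le continuous_fst continuous_snd)
    (.and (isClosed_le continuous_snd continuous_const)
    (isClosed_eq (hf.comp continuous_fst) (hf.comp continuous_snd))))

theorem isOpen_setOf_crosses : IsOpen {x : (ℝ × ℝ) × (ℝ × ℝ) | Crosses x.1 x.2} :=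
  .and (isOpen_lt (by fun_prop) (by fun_prop))
    (.and (isOpen_lt (by fun_prop) (by fun_prop)) (isOpen_lt (by fun_prop) (by fun_prop)))

theorem IsChord.mem_Icc (hp : IsChord f p) : p ∈ Icc ((0 : ℝ), (0 : ℝ)) (1, 1) :=
  ⟨⟨hp.nonneg, hp.nonneg.trans hp.le⟩, ⟨hp.le.trans hp.le_one, hp.le_one⟩⟩

namespace IsLamination

theorem mono {L' : Set (ℝ × ℝ)} (hL : IsLamination f L) (h : L' ⊆ L) : IsLamination f L' :=
  ⟨fun p hp => hL.isChord p (h hp), fun p hp q hq => hL.not_crosses p (h hp) q (h hq)⟩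

theorem exists_isMaximalLamination (f : ℝ → X) : ∃ L, IsMaximalLamination f L := by
  refine zorn_subset {L | IsLamination f L} fun c hc hchain =>
    ⟨⋃₀ c, ⟨?_, ?_⟩, fun s hs => subset_sUnion_of_mem hs⟩
  · rintro p ⟨s, hs, hp⟩
    exact (hc hs).isChord p hp
  · rintro p ⟨s, hs, hp⟩ q ⟨s', hs', hq⟩
    rcases hchain.total hs hs' with h | h
    · exact (hc hs').not_crosses p (h hp) q hq
    · exact (hc hs).not_crosses p hp q (h hq)

protected theorem closure [TopologicalSpace X] [T2Space X] (hL : IsLamination f L)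
    (hf : Continuous f) : IsLamination f (closure L) where
  isChord := closure_minimal hL.isChord (isClosed_setOf_isChord hf)
  not_crosses p hp q hq hpq := by
    have hmem : (p, q) ∈ closure (L ×ˢ L) := by
      rw [closure_prod_eq]
      exact ⟨hp, hq⟩
    obtain ⟨⟨p', q'⟩, hcross, hp', hq'⟩ := mem_closure_iff.1 hmem _ isOpen_setOf_crosses hpq
    exact hL.not_crosses p' hp' q' hq' hcross

end IsLamination

namespace IsMaximalLamination

theorem isLamination (hL : IsMaximalLamination f L) : IsLamination f L := hL.prop

theorem isChord (hL : IsMaximalLamination f L) (hp : p ∈ L) : IsChord f p :=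
  hL.isLamination.isChord p hp

theorem mem_of_not_crosses (hL : IsMaximalLamination f L) (hp : IsChord f p)
    (h₁ : ∀ q ∈ L, ¬ Crosses p q) (h₂ : ∀ q ∈ L, ¬ Crosses q p) : p ∈ L := by
  have hinsert : IsLamination f (insert p L) := by
    constructor
    · rintro q (rfl | hq)
      exacts [hp, hL.isChord hq]
    · rintro q (rfl | hq) r (rfl | hr)
      exacts [fun h => lt_irrefl _ h.1, h₁ r hr, h₂ q hq, hL.isLamination.not_crosses q hq r hr]
  exact hL.le_of_ge hinsert (subset_insert _ _) (mem_insert _ _)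

theorem diag_mem (hL : IsMaximalLamination f L) (ht : t ∈ Icc (0 : ℝ) 1) : (t, t) ∈ L :=
  hL.mem_of_not_crosses ⟨ht.1, le_rfl, ht.2, rfl⟩ (fun _ _ h => (h.1.trans h.2.1).false)
    (fun _ _ h => (h.2.1.trans h.2.2).false)

theorem zero_one_mem (hL : IsMaximalLamination f L) (h : f 0 = f 1) :
    (0, 1) ∈ L :=
  hL.mem_of_not_crosses ⟨le_rfl, zero_le_one, le_rfl, h⟩
    (fun _ hq hcross => (hL.isChord hq).le_one.not_gt hcross.2.2)
    fun _ hq hcross => (hL.isChord hq).nonneg.not_gt hcross.1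

theorem isCompact [TopologicalSpace X] [T2Space X] (hL : IsMaximalLamination f L)
    (hf : Continuous f) : IsCompact L :=
  isCompact_Icc.of_isClosed_subset (closure_subset_iff_isClosed.1 <|
    hL.le_of_ge (hL.isLamination.closure hf) subset_closure) fun _ hp => (hL.isChord hp).mem_Icc

end IsMaximalLamination

theorem chordsIn_subset : chordsIn L a b ⊆ L := sep_subset _ _

theorem isCompact_chordsIn (hL : IsCompact L) : IsCompact (chordsIn L a b) :=
  hL.inter_right <| .and (isClosed_le continuous_const continuous_fst)
    (isClosed_le continuous_snd continuous_const)

namespace IsTopChord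

theorem exists_of_isCompact (hL : IsCompact L) (ht : (t, t) ∈ L) (hs : 0 ≤ s) :
    ∃ p, IsTopChord L s t p := by
  have hcompact : IsCompact (L ∩ {q | q.1 ≤ t ∧ t ≤ q.2 ∧ q.2 - q.1 ≤ s}) :=
    hL.inter_right <| .and (isClosed_le (by fun_prop) (by fun_prop))
      (.and (isClosed_le (by fun_prop) (by fun_prop)) (isClosed_le (by fun_prop) (by fun_prop)))
  obtain ⟨p, ⟨hp, h₁, h₂, h₃⟩, hmax⟩ := hcompact.exists_isMaxOn
    ⟨(t, t), ht, le_rfl, le_rfl, by simpa using hs⟩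
    (f := fun q : ℝ × ℝ => q.2 - q.1) (by fun_prop)
  exact ⟨p, hp, h₁, h₂, h₃, fun q hq g₁ g₂ g₃ => hmax ⟨hq, g₁, g₂, g₃⟩⟩

theorem le_and_le_or_map_eq (hp : IsTopChord L s t p) (hL : IsLamination f L) (hq : q ∈ L)
    (hqt : q.1 ≤ t) (htq : t ≤ q.2) (hqs : q.2 - q.1 ≤ s) :
    (p.1 ≤ q.1 ∧ q.2 ≤ p.2) ∨ f q.1 = f p.1 := by
  have hlen := hp.longest q hq hqt htq hqs
  have hpt := hp.fst_le
  have htp := hp.le_snd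
  rcases lt_or_ge q.1 p.1 with h | h
  · right
    have hnc : ¬ p.1 < q.2 := fun h' => hL.not_crosses q hq p hp.mem ⟨h, h', by linarith⟩
    rw [(hL.isChord q hq).map_eq, show q.2 = p.1 by linarith]
  · rcases le_or_gt q.2 p.2 with h' | h'
    · exact Or.inl ⟨h, h'⟩
    · right
      have hnc : ¬ q.1 < p.2 := fun h'' => hL.not_crosses p hp.mem q hq ⟨by linarith, h'', h'⟩
      rw [(hL.isChord p hp.mem).map_eq, show q.1 = p.2 by linarith]

theorem map_fst_eq {u : ℝ} (hp : IsTopChord L s t p) (hL : IsLamination f L)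
    (hq : IsTopChord L s u q) (hu : u ∈ Icc p.1 p.2) : f p.1 = f q.1 := by
  rcases hq.le_and_le_or_map_eq hL hp.mem hu.1 hu.2 hp.length_le with h | h
  · rcases hp.le_and_le_or_map_eq hL hq.mem (h.1.trans hp.fst_le) (hp.le_snd.trans h.2)
      hq.length_le with h' | h'
    · rw [le_antisymm h'.1 h.1]
    · exact h'.symm
  · exact h

end IsTopChord

theorem bddAbove_nestedLengths : BddAbove (nestedLengths L p) := by
  refine ⟨p.2 - p.1, ?_⟩
  rintro r ⟨q, ⟨-, h₁, h₂⟩, -, rfl⟩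
  exact sub_le_sub h₂ h₁

theorem le_gapDepth (hq : q ∈ chordsIn L p.1 p.2) (hqp : q ≠ p) : q.2 - q.1 ≤ gapDepth L p :=
  le_csSup bddAbove_nestedLengths ⟨q, hq, hqp, rfl⟩

theorem IsMaximalLamination.zero_mem_nestedLengths (hL : IsMaximalLamination f L) (hp : p ∈ L)
    (hlt : p.1 < p.2) : 0 ∈ nestedLengths L p :=
  ⟨(p.1, p.1), ⟨hL.diag_mem ⟨(hL.isChord hp).nonneg, hlt.le.trans (hL.isChord hp).le_one⟩, le_rfl,
    hlt.le⟩, fun h => hlt.ne (congrArg Prod.snd h), sub_self _⟩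

theorem IsMaximalLamination.gapDepth_nonneg (hL : IsMaximalLamination f L) (hp : p ∈ L)
    (hlt : p.1 < p.2) : 0 ≤ gapDepth L p :=
  le_csSup bddAbove_nestedLengths (hL.zero_mem_nestedLengths hp hlt)

-- A nested chord of length close to that of `q` has its endpoints close to those of `q`.
theorem IsMaximalLamination.exists_chord_of_le_gapDepth {r : ℝ} (hL : IsMaximalLamination f L)
    (hq : q ∈ L) (hqt : q.1 < t) (htq : t < q.2) (hdepth : q.2 - q.1 ≤ gapDepth L q)
    (hr : r < q.2 - q.1) :
    ∃ c ∈ L, c.1 < t ∧ t < c.2 ∧ r < c.2 - c.1 ∧ c.2 - c.1 < q.2 - q.1 := by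
  have hlt : max r (max (q.2 - t) (t - q.1)) < gapDepth L q :=
    (max_lt hr (max_lt (by linarith) (by linarith))).trans_le hdepth
  obtain ⟨_, ⟨c, ⟨hc, hqc, hcq⟩, hcne, rfl⟩, hlen⟩ :=
    exists_lt_of_lt_csSup ⟨0, hL.zero_mem_nestedLengths hq (hqt.trans htq)⟩ hlt
  obtain ⟨hrc, hc₁, hc₂⟩ : r < c.2 - c.1 ∧ q.2 - t < c.2 - c.1 ∧ t - q.1 < c.2 - c.1 := by
    simpa only [max_lt_iff] using hlen
  refine ⟨c, hc, by linarith, by linarith, hrc, ?_⟩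
  by_contra hcon
  exact hcne (Prod.ext (by linarith) (by linarith))

theorem isCompact_gapFree (L : Set (ℝ × ℝ)) : IsCompact (gapFree L) :=
  (isCompact_Icc.prod isCompact_Icc).diff
    (isOpen_biUnion fun _ _ => isOpen_Ioo.prod isOpen_Ioo)

-- A chord crossing `(p.2, q.1)` would be a longer chord over `t` or over `u`.
theorem IsGapInterval.mk_snd_fst_mem {u : ℝ} (h : IsGapInterval L a b m)
    (hL : IsMaximalLamination f L)
    (hp : IsTopChord (chordsIn L a b) m t p) (hq : IsTopChord (chordsIn L a b) m u q)
    (hpu : p.2 < u) (htq : t < q.1) (hpq : f p.1 = f q.1) : (p.2, q.1) ∈ chordsIn L a b := by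
  have hpL := hp.mem.1
  have hqL := hq.mem.1
  have haq : a ≤ p.1 := hp.mem.2.1
  have hqb : q.2 ≤ b := hq.mem.2.2
  have hpc := hL.isChord hpL
  have hqc := hL.isChord hqL
  have hpt := hp.fst_le
  have htp := hp.le_snd
  have hqu := hq.fst_le
  have huq := hq.le_snd
  have hnc := hL.isLamination.not_crosses
  have hle : p.2 ≤ q.1 := by
    by_contra hlt
    exact hnc p hpL q hqL ⟨by linarith, not_le.1 hlt, by linarith⟩
  refine ⟨hL.mem_of_not_crosses ⟨hpc.nonneg.trans hpc.le, hle, hqc.le.trans hqc.le_one,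
    hpc.map_eq.symm.trans hpq⟩ ?_ ?_, by dsimp; linarith, by dsimp; linarith⟩
  · rintro r hr ⟨hpr, hrq, hqr⟩
    dsimp at hpr hrq hqr
    have hrb : r.2 ≤ b := by
      by_contra hlt
      exact h.not_crosses_right r hr ⟨by dsimp; linarith, by dsimp; linarith, not_le.1 hlt⟩
    have hrin : r ∈ chordsIn L a b := ⟨hr, by linarith, hrb⟩
    have hrm := h.length_le r hrin (by rintro rfl; dsimp at hpr; linarith)
    have hqr' : q.2 ≤ r.2 := by
      by_contra hlt
      exact hnc r hr q hqL ⟨hrq, hqr, not_le.1 hlt⟩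
    linarith [hq.longest r hrin (by linarith) (by linarith) hrm]
  · rintro r hr ⟨hrp, hpr, hrq⟩
    dsimp at hpr hrq hrp
    have har : a ≤ r.1 := by
      by_contra hlt
      exact h.not_crosses_left r hr ⟨not_le.1 hlt, by dsimp; linarith, by dsimp; linarith⟩
    have hrin : r ∈ chordsIn L a b := ⟨hr, har, by linarith⟩
    have hrm := h.length_le r hrin (by rintro rfl; dsimp at hrq; linarith)
    have hrp' : r.1 ≤ p.1 := by
      by_contra hlt
      exact hnc p hpL r hr ⟨not_le.1 hlt, hrp, hpr⟩
    linarith [hp.longest r hrin (by linarith) (by linarith) hrm]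

theorem length_le_of_tendsto_isTopChord {l : Filter (ℝ × ℝ)} [l.NeBot] {x p q : ℝ × ℝ}
    {P : ℝ × ℝ → ℝ × ℝ} (hL : IsMaximalLamination f L) (hl : l ≤ 𝓝[gapFree L] x)
    (hP : ∀ᶠ z in l, IsTopChord L z.1 z.2 (P z)) (hPp : Tendsto P l (𝓝 p))
    (hq : IsTopChord L x.1 x.2 q) (hqx : q.1 < x.2) (hxq : x.2 < q.2) :
    q.2 - q.1 ≤ p.2 - p.1 := by
  by_contra! hlt
  have hlx : l ≤ 𝓝 x := hl.trans nhdsWithin_le_nhds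
  have hfst : Tendsto Prod.fst l (𝓝 x.1) := (continuous_fst.tendsto x).mono_left hlx
  have hsnd : Tendsto Prod.snd l (𝓝 x.2) := (continuous_snd.tendsto x).mono_left hlx
  obtain ⟨r, hpr, hrq⟩ := exists_between hlt
  have hshort : ∀ᶠ z in l, (P z).2 - (P z).1 < r :=
    (((continuous_snd.sub continuous_fst).tendsto p).comp hPp).eventually (gt_mem_nhds hpr)
  have hover : ∀ᶠ z in l, q.1 < z.2 ∧ z.2 < q.2 :=
    (hsnd.eventually (lt_mem_nhds hqx)).and (hsnd.eventually (gt_mem_nhds hxq))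
  have hbelow : ∀ᶠ z in l, z.1 < q.2 - q.1 := by
    filter_upwards [hshort, hover, hP] with z hz hzq hPz
    by_contra! hcon
    linarith [hPz.longest q hq.mem hzq.1.le hzq.2.le hcon]
  have hx : q.2 - q.1 = x.1 :=
    hq.length_le.antisymm (le_of_tendsto hfst (hbelow.mono fun _ => le_of_lt))
  have hdepth : x.1 ≤ gapDepth L q := by
    refine le_of_tendsto hfst ?_
    filter_upwards [hover, hbelow, hl self_mem_nhdsWithin] with z hzq hz hzfree
    by_contra! hcon
    exact hzfree.2 (mem_biUnion hq.mem ⟨⟨hcon, hz⟩, hzq⟩)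
  obtain ⟨c, hc, hcx, hxc, hrc, hcq⟩ :=
    hL.exists_chord_of_le_gapDepth hq.mem hqx hxq (hx.trans_le hdepth) hrq
  obtain ⟨z, hz, hPz, hcz, hzc, hlen⟩ := (hshort.and (hP.and
    ((hsnd.eventually (lt_mem_nhds hcx)).and ((hsnd.eventually (gt_mem_nhds hxc)).and
      (hfst.eventually (lt_mem_nhds (hcq.trans_eq hx))))))).exists
  linarith [hPz.longest c hc hcz.le hzc.le hlen.le]

section Collapse

variable [TopologicalSpace X] [T2Space X]

theorem IsMaximalLamination.isTopChord_topChord (hL : IsMaximalLamination f L) (hf : Continuous f)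
    (hs : 0 ≤ s) (ht : t ∈ Icc (0 : ℝ) 1) : IsTopChord L s t (topChord L s t) :=
  Classical.epsilon_spec (IsTopChord.exists_of_isCompact (hL.isCompact hf) (hL.diag_mem ht) hs)

theorem collapse_eq_of_mem_chord {t' : ℝ} (hf : Continuous f) (hL : IsMaximalLamination f L)
    (hp : p ∈ L) (hps : p.2 - p.1 ≤ s) (ht : t ∈ Icc p.1 p.2) (ht' : t' ∈ Icc p.1 p.2) :
    collapse f L s t = collapse f L s t' := by
  have hchord := hL.isChord hp
  have hs : 0 ≤ s := (sub_nonneg.2 hchord.le).trans hps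
  have hI : Icc p.1 p.2 ⊆ Icc 0 1 := Icc_subset_Icc hchord.nonneg hchord.le_one
  have htop := hL.isTopChord_topChord hf hs (hI ht)
  have htop' := hL.isTopChord_topChord hf hs (hI ht')
  rcases htop.le_and_le_or_map_eq hL.isLamination hp ht.1 ht.2 hps with h | h
  · exact htop.map_fst_eq hL.isLamination htop' ⟨h.1.trans ht'.1, ht'.2.trans h.2⟩
  rcases htop'.le_and_le_or_map_eq hL.isLamination hp ht'.1 ht'.2 hps with h' | h'
  · exact (htop'.map_fst_eq hL.isLamination htop ⟨h'.1.trans ht.1, ht.2.trans h'.2⟩).symm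
  · exact h.symm.trans h'

theorem collapse_mem_image (hf : Continuous f) (hL : IsMaximalLamination f L) (hs : 0 ≤ s)
    (ht : t ∈ Icc (0 : ℝ) 1) : collapse f L s t ∈ f '' Icc 0 1 := by
  have htop := hL.isTopChord_topChord hf hs ht
  exact mem_image_of_mem f ⟨(hL.isChord htop.mem).nonneg, htop.fst_le.trans ht.2⟩

namespace IsGapInterval

theorem collapse_eq_of_isTopChord (h : IsGapInterval L a b m) (hf : Continuous f)
    (hL : IsMaximalLamination f L) (hq : IsTopChord (chordsIn L a b) m t q) :
    collapse f L m t = f q.1 := by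
  obtain ⟨-, haq, hqb⟩ := hq.mem
  have htop := hL.isTopChord_topChord hf h.nonneg_level
    ⟨h.nonneg_left.trans (haq.trans hq.fst_le), (hq.le_snd.trans hqb).trans h.right_le_one⟩
  have hqt := hq.fst_le
  have htq := hq.le_snd
  rcases h.separated _ htop.mem htop.length_le with hout | hout | hin
  · rw [collapse, (hL.isChord htop.mem).map_eq]
    congr 1
    linarith [htop.le_snd]
  · rw [collapse, (hL.isChord hq.mem.1).map_eq]
    congr 1
    linarith [htop.fst_le]
  · have htop' : IsTopChord (chordsIn L a b) m t (topChord L m t) :=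
      ⟨hin, htop.2, htop.3, htop.4, fun c hc => htop.longest c hc.1⟩
    exact htop'.map_fst_eq (hL.isLamination.mono chordsIn_subset) hq ⟨htop.2, htop.3⟩

theorem exists_isTopChord (h : IsGapInterval L a b m) (hf : Continuous f)
    (hL : IsMaximalLamination f L) (ht : t ∈ Icc a b) : ∃ p, IsTopChord (chordsIn L a b) m t p :=
  IsTopChord.exists_of_isCompact (isCompact_chordsIn (hL.isCompact hf))
    ⟨hL.diag_mem ⟨h.nonneg_left.trans ht.1, ht.2.trans h.right_le_one⟩, ht⟩ h.nonneg_level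

theorem eq_endpoints_or_forall_collapse_eq {u v : ℝ} (h : IsGapInterval L a b m)
    (hf : Continuous f) (hL : IsMaximalLamination f L) (hau : a ≤ u) (huv : u ≤ v) (hvb : v ≤ b)
    (huv' : collapse f L m u = collapse f L m v) :
    (u = a ∧ v = b) ∨ ∀ w ∈ Icc u v, collapse f L m w = collapse f L m u := by
  obtain ⟨p, hp⟩ := h.exists_isTopChord hf hL (t := u) ⟨hau, huv.trans hvb⟩
  obtain ⟨q, hq⟩ := h.exists_isTopChord hf hL (t := v) ⟨hau.trans huv, hvb⟩
  have const_p (w) (hw : w ∈ Icc p.1 p.2) : collapse f L m w = collapse f L m u :=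
    collapse_eq_of_mem_chord hf hL hp.mem.1 hp.length_le hw ⟨hp.fst_le, hp.le_snd⟩
  have const_q (w) (hw : w ∈ Icc q.1 q.2) : collapse f L m w = collapse f L m u :=
    (collapse_eq_of_mem_chord hf hL hq.mem.1 hq.length_le hw ⟨hq.fst_le, hq.le_snd⟩).trans
      huv'.symm
  rcases le_or_gt v p.2 with hvp | hpv
  · exact Or.inr fun w hw => const_p w ⟨hp.fst_le.trans hw.1, hw.2.trans hvp⟩
  rcases le_or_gt q.1 u with hqu | huq
  · exact Or.inr fun w hw => const_q w ⟨hqu.trans hw.1, hw.2.trans hq.le_snd⟩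
  have hmem : (p.2, q.1) ∈ chordsIn L a b := h.mk_snd_fst_mem hL hp hq hpv huq <| by
    rw [← h.collapse_eq_of_isTopChord hf hL hp, ← h.collapse_eq_of_isTopChord hf hL hq, huv']
  by_cases hab : (p.2, q.1) = (a, b)
  · rw [Prod.mk.injEq] at hab
    exact Or.inl ⟨(hp.le_snd.trans_eq hab.1).antisymm hau, hvb.antisymm (hab.2 ▸ hq.fst_le)⟩
  refine Or.inr fun w hw => ?_
  rcases le_total w p.2 with hwp | hpw
  · exact const_p w ⟨hp.fst_le.trans hw.1, hwp⟩
  rcases le_total w q.1 with hwq | hqw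
  · have hle := (hL.isChord hmem.1).le
    exact (collapse_eq_of_mem_chord hf hL hmem.1 (h.length_le _ hmem hab) ⟨hpw, hwq⟩
      ⟨le_rfl, hle⟩).trans (const_p _ ⟨hp.fst_le.trans hp.le_snd, le_rfl⟩)
  · exact const_q w ⟨hqw, hw.2.trans hq.le_snd⟩

end IsGapInterval

theorem map_fst_eq_of_tendsto_isTopChord {l : Filter (ℝ × ℝ)} [l.NeBot] {x p q : ℝ × ℝ}
    {P : ℝ × ℝ → ℝ × ℝ} (hf : Continuous f) (hL : IsMaximalLamination f L)
    (hl : l ≤ 𝓝[gapFree L] x) (hP : ∀ᶠ z in l, IsTopChord L z.1 z.2 (P z))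
    (hPp : Tendsto P l (𝓝 p)) (hq : IsTopChord L x.1 x.2 q) : f p.1 = f q.1 := by
  have hlx : l ≤ 𝓝 x := hl.trans nhdsWithin_le_nhds
  have hfst : Tendsto Prod.fst l (𝓝 x.1) := (continuous_fst.tendsto x).mono_left hlx
  have hsnd : Tendsto Prod.snd l (𝓝 x.2) := (continuous_snd.tendsto x).mono_left hlx
  have hp : p ∈ L := (hL.isCompact hf).isClosed.mem_of_tendsto hPp (hP.mono fun _ h => h.mem)
  have hP₁ : Tendsto (fun z => (P z).1) l (𝓝 p.1) := (continuous_fst.tendsto p).comp hPp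
  have hP₂ : Tendsto (fun z => (P z).2) l (𝓝 p.2) := (continuous_snd.tendsto p).comp hPp
  have hpx : p.1 ≤ x.2 := le_of_tendsto_of_tendsto hP₁ hsnd (hP.mono fun _ h => h.fst_le)
  have hxp : x.2 ≤ p.2 := le_of_tendsto_of_tendsto hsnd hP₂ (hP.mono fun _ h => h.le_snd)
  have hlen : p.2 - p.1 ≤ x.1 :=
    le_of_tendsto_of_tendsto (hP₂.sub hP₁) hfst (hP.mono fun _ h => h.length_le)
  rcases hq.le_and_le_or_map_eq hL.isLamination hp hpx hxp hlen with ⟨hqp, hpq⟩ | h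
  swap
  · exact h
  rcases hq.fst_le.eq_or_lt with hqx | hqx
  · rw [(hpx.trans_eq hqx.symm).antisymm hqp]
  rcases hq.le_snd.eq_or_lt with hxq | hxq
  · rw [(hL.isChord hp).map_eq, (hL.isChord hq.mem).map_eq, hpq.antisymm (hxq ▸ hxp)]
  · have := length_le_of_tendsto_isTopChord hL hl hP hPp hq hqx hxq
    rw [show p.1 = q.1 by linarith]

theorem continuousOn_collapse (hf : Continuous f) (hL : IsMaximalLamination f L) :
    ContinuousOn (fun x : ℝ × ℝ => collapse f L x.1 x.2) (gapFree L) := by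
  have htop (z) (hz : z ∈ gapFree L) : IsTopChord L z.1 z.2 (topChord L z.1 z.2) :=
    hL.isTopChord_topChord hf hz.1.1.1 hz.1.2
  refine fun x hx => (tendsto_iff_ultrafilter _ _ _).2 fun l hl => ?_
  have hP : ∀ᶠ z : ℝ × ℝ in l, IsTopChord L z.1 z.2 (topChord L z.1 z.2) :=
    Eventually.mono (hl self_mem_nhdsWithin) htop
  obtain ⟨p, -, hPp⟩ := (hL.isCompact hf).ultrafilter_le_nhds'
    (l.map fun z : ℝ × ℝ => topChord L z.1 z.2) (hP.mono fun _ h => h.mem)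
  have hp : f p.1 = collapse f L x.1 x.2 :=
    map_fst_eq_of_tendsto_isTopChord hf hL hl hP hPp (htop x hx)
  dsimp only
  rw [← hp]
  exact ((hf.comp continuous_fst).tendsto p).comp hPp

end Collapse

end Lamination

/-! ### Arcs and Jordan loops -/

section Reparametrization

open Topology unitInterval

/-- The variation of `g` from the point `q` up to the point `t`, truncated at `1`. The interval
`[q, t]` is parametrized by `[0, 1]`, so that the supremum is over a fixed compact set. -/
noncomputable def variationFrom {X : Type*} [MetricSpace X] (g : ℝ → X) (q t : ℝ) : ℝ :=
  sSup ((fun τ : ℝ => min 1 (dist (g (q + τ * max (t - q) 0)) (g q))) '' Icc 0 1)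

/-- A function on the line that is constant on exactly the intervals on which `g` is constant. -/
noncomputable def weightedVariation {X : Type*} [MetricSpace X] (g : ℝ → X) (t : ℝ) : ℝ :=
  ∑' q : ℚ, (1 / 2 : ℝ) ^ Encodable.encode q * variationFrom g q t

/-- A loop whose only coincidences are its endpoints and intervals of constancy. -/
structure IsJordanLoop {X : Type*} [TopologicalSpace X] (γ : C(I, X)) : Prop where
  loop : γ 0 = γ 1
  eq_endpoints_or_const :
    ∀ u v, u ≤ v → γ u = γ v → (u = 0 ∧ v = 1) ∨ ∀ w ∈ Icc u v, γ w = γ u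

section Variation

variable {X : Type*} [MetricSpace X] {g : ℝ → X}

theorem continuous_variationFrom (hg : Continuous g) (q : ℝ) : Continuous (variationFrom g q) := by
  refine IsCompact.continuous_sSup (f := fun t τ : ℝ =>
    min 1 (dist (g (q + τ * max (t - q) 0)) (g q))) isCompact_Icc ?_
  change Continuous fun x : ℝ × ℝ => min 1 (dist (g (q + x.2 * max (x.1 - q) 0)) (g q))
  fun_prop

theorem bddAbove_variationFrom (g : ℝ → X) (q t : ℝ) :
    BddAbove ((fun τ : ℝ => min 1 (dist (g (q + τ * max (t - q) 0)) (g q))) '' Icc 0 1) := by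
  refine ⟨1, ?_⟩
  rintro _ ⟨τ, -, rfl⟩
  exact min_le_left _ _

theorem le_variationFrom (g : ℝ → X) {q s t : ℝ} (hqs : q ≤ s) (hst : s ≤ t) :
    min 1 (dist (g s) (g q)) ≤ variationFrom g q t := by
  refine le_csSup (bddAbove_variationFrom g q t) ?_
  rcases (hqs.trans hst).eq_or_lt with rfl | h
  · exact ⟨0, left_mem_Icc.2 zero_le_one, by simp [hst.antisymm hqs]⟩
  · have hpos : 0 < t - q := sub_pos.2 h
    refine ⟨(s - q) / (t - q), ⟨div_nonneg (sub_nonneg.2 hqs) hpos.le,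
      (div_le_one hpos).2 (by linarith)⟩, ?_⟩
    simp only [max_eq_left hpos.le, div_mul_cancel₀ _ hpos.ne', add_sub_cancel]

theorem variationFrom_le (g : ℝ → X) {q t c : ℝ} (hc : 0 ≤ c)
    (h : ∀ s, q ≤ s → s ≤ t → min 1 (dist (g s) (g q)) ≤ c) : variationFrom g q t ≤ c := by
  refine csSup_le ((nonempty_Icc.2 zero_le_one).image _) ?_
  rintro _ ⟨τ, hτ, rfl⟩
  rcases le_total t q with ht | ht
  · simpa [max_eq_right (sub_nonpos.2 ht)] using hc
  · have hqt := sub_nonneg.2 ht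
    simp only [max_eq_left hqt]
    exact h _ (le_add_of_nonneg_right (mul_nonneg hτ.1 hqt))
      (by linarith [mul_le_of_le_one_left hqt hτ.2])

theorem variationFrom_nonneg (g : ℝ → X) (q t : ℝ) : 0 ≤ variationFrom g q t :=
  le_csSup_of_le (bddAbove_variationFrom g q t) ⟨0, left_mem_Icc.2 zero_le_one, rfl⟩ (by simp)

theorem variationFrom_le_one (g : ℝ → X) (q t : ℝ) : variationFrom g q t ≤ 1 :=
  variationFrom_le g zero_le_one fun _ _ _ => min_le_left _ _

theorem monotone_variationFrom (g : ℝ → X) (q : ℝ) : Monotone (variationFrom g q) := fun _ _ h =>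
  variationFrom_le g (variationFrom_nonneg g q _) fun _ h₁ h₂ => le_variationFrom g h₁ (h₂.trans h)

theorem norm_mul_variationFrom_le (g : ℝ → X) (q : ℚ) (t : ℝ) :
    ‖(1 / 2 : ℝ) ^ Encodable.encode q * variationFrom g q t‖ ≤ (1 / 2) ^ Encodable.encode q := by
  rw [Real.norm_of_nonneg (mul_nonneg (by positivity) (variationFrom_nonneg g q t))]
  exact mul_le_of_le_one_right (by positivity) (variationFrom_le_one g q t)

theorem summable_variationFrom (g : ℝ → X) (t : ℝ) :
    Summable fun q : ℚ => (1 / 2 : ℝ) ^ Encodable.encode q * variationFrom g q t :=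
  summable_geometric_two_encode.of_norm_bounded fun q => norm_mul_variationFrom_le g q t

theorem continuous_weightedVariation (hg : Continuous g) : Continuous (weightedVariation g) :=
  continuous_tsum (fun q => continuous_const.mul (continuous_variationFrom hg q))
    summable_geometric_two_encode (norm_mul_variationFrom_le g)

theorem monotone_weightedVariation (g : ℝ → X) : Monotone (weightedVariation g) := fun u v h =>
  (summable_variationFrom g u).tsum_le_tsum
    (fun q => mul_le_mul_of_nonneg_left (monotone_variationFrom g q h) (by positivity))
    (summable_variationFrom g v)

theorem exists_variationFrom_lt {u v w : ℝ} (hg : Continuous g) (hw : w ∈ Icc u v)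
    (hne : g w ≠ g u) : ∃ q : ℚ, variationFrom g q u < variationFrom g q v := by
  have huw : u < w := hw.1.lt_of_ne (by rintro rfl; exact hne rfl)
  obtain ⟨l, hul, hl⟩ := (mem_nhdsGE_iff_exists_Ico_subset' huw).1
    (mem_nhdsWithin_of_mem_nhds (hg.continuousAt.eventually_ne hne.symm))
  obtain ⟨q, huq, hq⟩ := exists_rat_btwn (lt_min hul huw)
  have hgq : g w ≠ g q := (hl ⟨huq.le, hq.trans_le (min_le_left _ _)⟩).symm
  refine ⟨q, lt_of_le_of_lt (variationFrom_le g le_rfl fun s h₁ h₂ => by linarith) ?_⟩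
  exact (lt_min one_pos (dist_pos.2 hgq)).trans_le
    (le_variationFrom g (hq.le.trans (min_le_right _ _)) hw.2)

theorem variationFrom_eq_of_forall_eq {u v : ℝ} (huv : u ≤ v) (h : ∀ w ∈ Icc u v, g w = g u)
    (q : ℝ) : variationFrom g q u = variationFrom g q v := by
  refine (monotone_variationFrom g q huv).antisymm
    (variationFrom_le g (variationFrom_nonneg g q u) fun s hqs hsv => ?_)
  rcases le_total s u with hsu | hus
  · exact le_variationFrom g hqs hsu
  rcases le_total q u with hqu | huq
  · rw [h s ⟨hus, hsv⟩]
    exact le_variationFrom g hqu le_rfl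
  · rw [h s ⟨hus, hsv⟩, h q ⟨huq, hqs.trans hsv⟩]
    simpa using variationFrom_nonneg g q u

theorem weightedVariation_eq_iff {u v : ℝ} (hg : Continuous g) (huv : u ≤ v) :
    weightedVariation g u = weightedVariation g v ↔ ∀ w ∈ Icc u v, g w = g u := by
  refine ⟨fun heq => ?_, fun h => tsum_congr fun q => by
    rw [variationFrom_eq_of_forall_eq huv h]⟩
  by_contra! hcon
  obtain ⟨w, hw, hne⟩ := hcon
  obtain ⟨q, hq⟩ := exists_variationFrom_lt hg hw hne
  refine heq.not_lt ((summable_variationFrom g u).tsum_lt_tsum (i := q) (fun r => ?_) ?_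
    (summable_variationFrom g v))
  · exact mul_le_mul_of_nonneg_left (monotone_variationFrom g r huv) (by positivity)
  · exact mul_lt_mul_of_pos_left hq (by positivity)

end Variation

section Factorization

variable {X : Type*} [MetricSpace X]

theorem IccExtend_const_on_iff {Y : Type*} (γ : I → Y) (u v : I) :
    (∀ w ∈ Icc (u : ℝ) v, IccExtend zero_le_one γ w = γ u) ↔ ∀ w ∈ Icc u v, γ w = γ u := by
  refine ⟨fun h w hw => by simpa using h w hw, fun h w hw => ?_⟩
  have hw' : w ∈ Icc (0 : ℝ) 1 := ⟨u.2.1.trans hw.1, hw.2.trans v.2.2⟩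
  rw [IccExtend_of_mem _ _ hw']
  exact h ⟨w, hw'⟩ hw

theorem exists_monotone_eq_iff_const (γ : C(I, X)) (hne : ∃ t, γ t ≠ γ 0) :
    ∃ Φ : C(I, I), Monotone Φ ∧ Φ 0 = 0 ∧ Φ 1 = 1 ∧
      ∀ u v, u ≤ v → (Φ u = Φ v ↔ ∀ w ∈ Icc u v, γ w = γ u) := by
  have hg : Continuous (IccExtend zero_le_one γ) := γ.continuous.Icc_extend'
  set φ := weightedVariation (IccExtend zero_le_one γ)
  have hmono : Monotone φ := monotone_weightedVariation _
  have hcont : Continuous φ := continuous_weightedVariation hg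
  have hφ (u v : I) (huv : u ≤ v) : φ u = φ v ↔ ∀ w ∈ Icc u v, γ w = γ u := by
    rw [weightedVariation_eq_iff hg huv, IccExtend_val, IccExtend_const_on_iff]
  have hlt : 0 < φ 1 - φ 0 := by
    refine sub_pos.2 ((hmono zero_le_one).lt_of_ne fun h => ?_)
    obtain ⟨t, ht⟩ := hne
    exact ht ((hφ 0 1 zero_le_one).1 (by simpa using h) t ⟨t.2.1, t.2.2⟩)
  let Φ : C(I, I) := ⟨fun t => ⟨(φ t - φ 0) / (φ 1 - φ 0),
    div_nonneg (sub_nonneg.2 (hmono t.2.1)) hlt.le,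
    (div_le_one hlt).2 (sub_le_sub_right (hmono t.2.2) _)⟩, by fun_prop⟩
  refine ⟨Φ, fun u v h => Subtype.mk_le_mk.2
    (div_le_div_of_nonneg_right (sub_le_sub_right (hmono h) _) hlt.le),
    Subtype.ext (by simp [Φ]), Subtype.ext (by simp [Φ, div_self hlt.ne']), fun u v huv => ?_⟩
  rw [← hφ u v huv, Subtype.ext_iff]
  exact (div_left_inj' hlt.ne').trans sub_left_inj

theorem surjective_of_map_zero_of_map_one {Φ : C(I, I)} (h₀ : Φ 0 = 0) (h₁ : Φ 1 = 1) :
    Function.Surjective Φ := fun _ =>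
  intermediate_value_univ 0 1 Φ.continuous
    ⟨h₀.trans_le unitInterval.nonneg', unitInterval.le_one'.trans_eq h₁.symm⟩

theorem exists_light_factorization (γ : C(I, X)) (hne : ∃ t, γ t ≠ γ 0) :
    ∃ (γ' : C(I, X)) (Φ : C(I, I)), γ'.comp Φ = γ ∧ Monotone Φ ∧ Φ 0 = 0 ∧ Φ 1 = 1 ∧
      ∀ u v, u ≤ v → (Φ u = Φ v ↔ ∀ w ∈ Icc u v, γ w = γ u) := by
  obtain ⟨Φ, hmono, h₀, h₁, hΦ⟩ := exists_monotone_eq_iff_const γ hne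
  have hquot : IsQuotientMap Φ := Φ.continuous.isClosedMap.isQuotientMap Φ.continuous
    (surjective_of_map_zero_of_map_one h₀ h₁)
  have hfactor : Function.FactorsThrough γ Φ := by
    intro u v h
    rcases le_total u v with huv | hvu
    · exact ((hΦ u v huv).1 h v ⟨huv, le_rfl⟩).symm
    · exact (hΦ v u hvu).1 h.symm u ⟨hvu, le_rfl⟩
  exact ⟨hquot.lift γ hfactor, Φ, hquot.lift_comp γ hfactor, hmono, h₀, h₁, hΦ⟩

theorem range_eq_of_comp_eq {γ γ' : C(I, X)} {Φ : C(I, I)} (h : γ'.comp Φ = γ) (h₀ : Φ 0 = 0)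
    (h₁ : Φ 1 = 1) : range γ' = range γ := by
  rw [← h, ContinuousMap.coe_comp, (surjective_of_map_zero_of_map_one h₀ h₁).range_comp]

theorem exists_injective_of_eq_imp_const (γ : C(I, X)) (hne : γ 0 ≠ γ 1)
    (h : ∀ u v, u ≤ v → γ u = γ v → ∀ w ∈ Icc u v, γ w = γ u) :
    ∃ γ' : C(I, X), Function.Injective γ' ∧ γ' 0 = γ 0 ∧ γ' 1 = γ 1 ∧ range γ' = range γ := by
  obtain ⟨γ', Φ, hcomp, -, h₀, h₁, hΦ⟩ := exists_light_factorization γ ⟨1, hne.symm⟩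
  have hγ (t : I) : γ' (Φ t) = γ t := DFunLike.congr_fun hcomp t
  refine ⟨γ', fun x y hxy => ?_, by rw [← hγ, h₀], by rw [← hγ, h₁],
    range_eq_of_comp_eq hcomp h₀ h₁⟩
  obtain ⟨u, rfl⟩ := surjective_of_map_zero_of_map_one h₀ h₁ x
  obtain ⟨v, rfl⟩ := surjective_of_map_zero_of_map_one h₀ h₁ y
  rw [hγ, hγ] at hxy
  rcases le_total u v with huv | hvu
  · exact (hΦ u v huv).2 (h u v huv hxy)
  · exact ((hΦ v u hvu).2 (h v u hvu hxy.symm)).symm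

end Factorization

section Arc

theorem IsLamination.isGapInterval_zero_one {X : Type*} {f : ℝ → X} {L : Set (ℝ × ℝ)}
    (hL : IsLamination f L) : IsGapInterval L 0 1 1 where
  nonneg_left := le_rfl
  right_le_one := le_rfl
  nonneg_level := zero_le_one
  not_crosses_left q hq h := (hL.isChord q hq).nonneg.not_gt h.1
  not_crosses_right q hq h := (hL.isChord q hq).le_one.not_gt h.2.2
  length_le q hq _ := by linarith [hq.2.1, hq.2.2]
  separated q hq _ := Or.inr (Or.inr ⟨hq, (hL.isChord q hq).nonneg, (hL.isChord q hq).le_one⟩)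

theorem IsLamination.mk_one_mem_gapFree {X : Type*} {f : ℝ → X} {L : Set (ℝ × ℝ)}
    (hL : IsLamination f L) (t : I) : ((1 : ℝ), (t : ℝ)) ∈ gapFree L := by
  refine ⟨⟨⟨zero_le_one, le_rfl⟩, t.2⟩, fun h => ?_⟩
  obtain ⟨p, hp, ⟨-, hlt⟩, -⟩ := mem_iUnion₂.1 h
  dsimp at hlt
  linarith [(hL.isChord p hp).nonneg, (hL.isChord p hp).le_one]

section Collapse

variable {X : Type*} [TopologicalSpace X] [T2Space X] {f : ℝ → X} {L : Set (ℝ × ℝ)} {s : ℝ}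

theorem collapse_eq_self {t : ℝ} (hf : Continuous f) (hL : IsMaximalLamination f L) (hs : 0 ≤ s)
    (ht : t ∈ Icc (0 : ℝ) 1) (h : ∀ q ∈ L, q.2 - q.1 ≤ s → q.1 < t → q.2 ≤ t) :
    collapse f L s t = f t := by
  have htop := hL.isTopChord_topChord hf hs ht
  rcases htop.fst_le.eq_or_lt with heq | hlt
  · rw [collapse, heq]
  · rw [collapse, (hL.isChord htop.mem).map_eq,
      (h _ htop.mem htop.length_le hlt).antisymm htop.le_snd]

theorem collapse_zero_right (hf : Continuous f) (hL : IsMaximalLamination f L) (hs : 0 ≤ s) :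
    collapse f L s 0 = f 0 :=
  collapse_eq_self hf hL hs (left_mem_Icc.2 zero_le_one)
    fun _ hq _ hlt => absurd hlt (hL.isChord hq).nonneg.not_gt

theorem collapse_one_right (hf : Continuous f) (hL : IsMaximalLamination f L) (hs : 0 ≤ s) :
    collapse f L s 1 = f 1 :=
  collapse_eq_self hf hL hs (right_mem_Icc.2 zero_le_one) fun _ hq _ _ => (hL.isChord hq).le_one

end Collapse

-- The arc is obtained by collapsing all chords of a maximal lamination of the path.
theorem exists_injective_range_subset {X : Type*} [MetricSpace X] (γ : C(I, X))
    (hne : γ 0 ≠ γ 1) : ∃ γ' : C(I, X), Function.Injective γ' ∧ γ' 0 = γ 0 ∧ γ' 1 = γ 1 ∧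
      range γ' ⊆ range γ := by
  set f : ℝ → X := IccExtend zero_le_one γ with hfdef
  have hf : Continuous f := γ.continuous.Icc_extend'
  obtain ⟨L, hL⟩ := IsLamination.exists_isMaximalLamination f
  let δ : C(I, X) := ⟨fun t => collapse f L 1 t,
    (continuousOn_collapse hf hL).comp_continuous (by fun_prop) hL.isLamination.mk_one_mem_gapFree⟩
  have h₀ : δ 0 = γ 0 := (collapse_zero_right hf hL zero_le_one).trans (by simp [hfdef])
  have h₁ : δ 1 = γ 1 := (collapse_one_right hf hL zero_le_one).trans (by simp [hfdef])
  have hrange : range δ ⊆ range γ := by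
    rintro _ ⟨t, rfl⟩
    obtain ⟨s, -, hs⟩ := collapse_mem_image hf hL zero_le_one t.2
    exact ⟨_, hs⟩
  obtain ⟨γ', hinj, h₀', h₁', hrange'⟩ := exists_injective_of_eq_imp_const δ (by rwa [h₀, h₁]) <| by
    intro u v huv heq
    rcases hL.isLamination.isGapInterval_zero_one.eq_endpoints_or_forall_collapse_eq
      hf hL u.2.1 huv v.2.2 heq with ⟨hu, hv⟩ | hconst
    · rw [show u = 0 from Subtype.ext hu, show v = 1 from Subtype.ext hv, h₀, h₁] at heq
      exact absurd heq hne
    · exact fun w hw => hconst w hw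
  exact ⟨γ', hinj, h₀'.trans h₀, h₁'.trans h₁, hrange' ▸ hrange⟩

end Arc

section JordanLoop

theorem eq_endpoints_of_coe_addCircle_eq {u v : I} (huv : u < v)
    (h : ((u : ℝ) : AddCircle (1 : ℝ)) = ((v : ℝ) : AddCircle (1 : ℝ))) : u = 0 ∧ v = 1 := by
  have hu : (u : ℝ) ∈ Ico (0 : ℝ) (0 + 1) := ⟨u.2.1, by simpa using huv.trans_le v.2.2⟩
  rcases v.2.2.lt_or_eq with hv | hv
  · have hv' : (v : ℝ) ∈ Ico (0 : ℝ) (0 + 1) := ⟨v.2.1, by simpa using hv⟩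
    exact absurd (Subtype.ext ((AddCircle.coe_eq_coe_iff_of_mem_Ico hu hv').1 h)) huv.ne
  · rw [hv, AddCircle.coe_period, ← AddCircle.coe_zero] at h
    exact ⟨Subtype.ext ((AddCircle.coe_eq_coe_iff_of_mem_Ico hu (by simp)).1 h), Subtype.ext hv⟩

theorem isQuotientMap_coe_addCircle :
    IsQuotientMap (fun t : I => ((t : ℝ) : AddCircle (1 : ℝ))) := by
  have hcont : Continuous fun t : I => ((t : ℝ) : AddCircle (1 : ℝ)) :=
    (AddCircle.continuous_mk' 1).comp continuous_subtype_val
  refine hcont.isClosedMap.isQuotientMap hcont fun y => ?_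
  obtain ⟨t, ht, rfl⟩ := AddCircle.eq_coe_Ico y
  exact ⟨⟨t, Ico_subset_Icc_self ht⟩, rfl⟩

theorem isJordanCurve_range {X : Type} [TopologicalSpace X] [T2Space X] (γ : C(I, X))
    (hloop : γ 0 = γ 1) (h : ∀ u v, u < v → γ u = γ v → u = 0 ∧ v = 1) :
    IsJordanCurve (range γ) := by
  let π : C(I, AddCircle (1 : ℝ)) := ⟨_, isQuotientMap_coe_addCircle.continuous⟩
  have hπ : IsQuotientMap π := isQuotientMap_coe_addCircle
  have hfactor : Function.FactorsThrough γ π := by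
    intro u v huv
    wlog hlt : u < v generalizing u v
    · rcases (not_lt.1 hlt).eq_or_lt with heq | hgt
      · rw [heq]
      · exact (this huv.symm hgt).symm
    obtain ⟨rfl, rfl⟩ := eq_endpoints_of_coe_addCircle_eq hlt huv
    exact hloop
  have hlift : hπ.lift γ hfactor ∘ π = γ := congrArg DFunLike.coe (hπ.lift_comp γ hfactor)
  have hinj : Function.Injective (hπ.lift γ hfactor) := by
    intro x y hxy
    obtain ⟨u, rfl⟩ := hπ.surjective x
    obtain ⟨v, rfl⟩ := hπ.surjective y
    replace hxy : γ u = γ v := by rw [← hlift]; exact hxy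
    wlog hlt : u < v generalizing u v
    · rcases (not_lt.1 hlt).eq_or_lt with heq | hgt
      · rw [heq]
      · exact (this v u hxy.symm hgt).symm
    obtain ⟨rfl, rfl⟩ := h u v hlt hxy
    exact (AddCircle.coe_period (1 : ℝ)).symm
  have hrange : range (hπ.lift γ hfactor) = range γ := by rw [← hlift, hπ.surjective.range_comp]
  rw [← hrange]
  exact ⟨((hπ.lift γ hfactor).continuous.isClosedEmbedding hinj).isEmbedding.toHomeomorph⟩

theorem IsJordanLoop.isJordanCurve_range {X : Type} [MetricSpace X] {γ : C(I, X)}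
    (h : IsJordanLoop γ) (hne : ∃ t, γ t ≠ γ 0) : IsJordanCurve (range γ) := by
  obtain ⟨γ', Φ, hcomp, hmono, h₀, h₁, hΦ⟩ := exists_light_factorization γ hne
  have hγ (t : I) : γ' (Φ t) = γ t := DFunLike.congr_fun hcomp t
  rw [← range_eq_of_comp_eq hcomp h₀ h₁]
  refine _root_.isJordanCurve_range γ' ?_ fun x y hxy heq => ?_
  · calc γ' 0 = γ 0 := by rw [← hγ, h₀]
      _ = γ 1 := h.loop
      _ = γ' 1 := by rw [← hγ, h₁]
  obtain ⟨u, rfl⟩ := surjective_of_map_zero_of_map_one h₀ h₁ x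
  obtain ⟨v, rfl⟩ := surjective_of_map_zero_of_map_one h₀ h₁ y
  rw [hγ, hγ] at heq
  have huv : u ≤ v := (hmono.reflect_lt hxy).le
  rcases h.eq_endpoints_or_const u v huv heq with ⟨rfl, rfl⟩ | hconst
  · exact ⟨h₀, h₁⟩
  · exact absurd ((hΦ u v huv).2 hconst) hxy.ne

end JordanLoop

end Reparametrization

/-! ### Filling loops -/

section GapBoxes

open unitInterval

/-- A chord of `L` with a nonempty gap box below it. -/
structure IsGap (L : Set (ℝ × ℝ)) (p : ℝ × ℝ) : Prop where
  mem : p ∈ L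
  fst_lt_snd : p.1 < p.2
  gapDepth_lt : gapDepth L p < p.2 - p.1

/-- The loop traced by the collapsed map along the bottom of the gap box of `p`. -/
def IsGapLoop {X : Type*} [TopologicalSpace X] (f : ℝ → X) (L : Set (ℝ × ℝ)) (p : ℝ × ℝ)
    (γ : C(I, X)) : Prop :=
  ∀ t : I, γ t = collapse f L (gapDepth L p) (p.1 + t * (p.2 - p.1))

/-- The affine coordinates identifying the closed gap box of `p` with the unit square, extended to
the plane by projection. -/
noncomputable def gapCoord (L : Set (ℝ × ℝ)) (p z : ℝ × ℝ) : I × I :=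
  (projIcc 0 1 zero_le_one ((z.1 - gapDepth L p) / (p.2 - p.1 - gapDepth L p)),
    projIcc 0 1 zero_le_one ((z.2 - p.1) / (p.2 - p.1)))

theorem isOpen_gapBox (L : Set (ℝ × ℝ)) (p : ℝ × ℝ) : IsOpen (gapBox L p) :=
  isOpen_Ioo.prod isOpen_Ioo

theorem continuous_gapCoord (L : Set (ℝ × ℝ)) (p : ℝ × ℝ) : Continuous (gapCoord L p) := by
  unfold gapCoord
  fun_prop

theorem add_mul_sub_mem_Icc {a b : ℝ} (hab : a ≤ b) (t : I) : a + t * (b - a) ∈ Icc a b := by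
  constructor <;> nlinarith [t.2.1, t.2.2]

variable {X : Type*} {f : ℝ → X} {L : Set (ℝ × ℝ)} {p q z : ℝ × ℝ}

theorem isGap_of_mem_gapBox (hp : p ∈ L) (hz : z ∈ gapBox L p) : IsGap L p :=
  ⟨hp, hz.2.1.trans hz.2.2, hz.1.1.trans hz.1.2⟩

theorem IsLamination.disjoint_gapBox (hL : IsLamination f L) (hp : p ∈ L) (hq : q ∈ L)
    (hpq : p ≠ q) : Disjoint (gapBox L p) (gapBox L q) := by
  rw [Set.disjoint_left]
  rintro z ⟨⟨hpz, hzp⟩, hpz', hzp'⟩ ⟨⟨hqz, hzq⟩, hqz', hzq'⟩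
  have hnest : ¬ (p.1 ≤ q.1 ∧ q.2 ≤ p.2) := fun h => by
    linarith [le_gapDepth ⟨hq, h⟩ hpq.symm]
  have hnest' : ¬ (q.1 ≤ p.1 ∧ p.2 ≤ q.2) := fun h => by
    linarith [le_gapDepth ⟨hp, h⟩ hpq]
  rcases le_total p.1 q.1 with h | h
  · have hlt : p.2 < q.2 := not_le.1 fun hc => hnest ⟨h, hc⟩
    exact hL.not_crosses p hp q hq
      ⟨not_le.1 fun hc => hnest' ⟨hc, hlt.le⟩, hqz'.trans hzp', hlt⟩
  · have hlt : q.2 < p.2 := not_le.1 fun hc => hnest' ⟨h, hc⟩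
    exact hL.not_crosses q hq p hp
      ⟨not_le.1 fun hc => hnest ⟨hc, hlt.le⟩, hpz'.trans hzq', hlt⟩

namespace IsGap

theorem closure_gapBox (hp : IsGap L p) :
    closure (gapBox L p) = Icc (gapDepth L p) (p.2 - p.1) ×ˢ Icc p.1 p.2 := by
  rw [gapBox, closure_prod_eq, closure_Ioo hp.gapDepth_lt.ne, closure_Ioo hp.fst_lt_snd.ne]

theorem gapDepth_nonneg (hp : IsGap L p) (hL : IsMaximalLamination f L) : 0 ≤ gapDepth L p :=
  hL.gapDepth_nonneg hp.mem hp.fst_lt_snd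

theorem Icc_subset (hp : IsGap L p) (hL : IsMaximalLamination f L) : Icc p.1 p.2 ⊆ Icc 0 1 :=
  Icc_subset_Icc (hL.isChord hp.mem).nonneg (hL.isChord hp.mem).le_one

theorem closure_gapBox_subset (hp : IsGap L p) (hL : IsMaximalLamination f L) :
    closure (gapBox L p) ⊆ Icc 0 1 ×ˢ Icc 0 1 := by
  have hchord := hL.isChord hp.mem
  rw [hp.closure_gapBox]
  exact prod_mono (Icc_subset_Icc (hp.gapDepth_nonneg hL) (by linarith [hchord.nonneg,
    hchord.le_one])) (hp.Icc_subset hL)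

theorem frontier_gapBox_subset (hp : IsGap L p) (hL : IsMaximalLamination f L) :
    frontier (gapBox L p) ⊆ gapFree L := by
  intro z hz
  have hzc := frontier_subset_closure hz
  refine ⟨hp.closure_gapBox_subset hL hzc, fun h => ?_⟩
  obtain ⟨q, hq, hzq⟩ := mem_iUnion₂.1 h
  rcases eq_or_ne p q with rfl | hpq
  · exact ((isOpen_gapBox L p).frontier_eq ▸ hz).2 hzq
  · obtain ⟨w, hwq, hwp⟩ := mem_closure_iff.1 hzc _ (isOpen_gapBox L q) hzq
    exact (hL.isLamination.disjoint_gapBox hp.mem hq hpq).le_bot ⟨hwp, hwq⟩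

theorem bottom_mem_gapFree {t : ℝ} (hp : IsGap L p) (hL : IsMaximalLamination f L)
    (ht : t ∈ Icc p.1 p.2) : (gapDepth L p, t) ∈ gapFree L := by
  refine hp.frontier_gapBox_subset hL ?_
  rw [(isOpen_gapBox L p).frontier_eq, hp.closure_gapBox]
  exact ⟨⟨⟨le_rfl, hp.gapDepth_lt.le⟩, ht⟩, fun h => lt_irrefl _ h.1.1⟩

theorem top_mem_gapFree {t : ℝ} (hp : IsGap L p) (hL : IsMaximalLamination f L)
    (ht : t ∈ Icc p.1 p.2) : (p.2 - p.1, t) ∈ gapFree L := by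
  refine hp.frontier_gapBox_subset hL ?_
  rw [(isOpen_gapBox L p).frontier_eq, hp.closure_gapBox]
  exact ⟨⟨⟨hp.gapDepth_lt.le, le_rfl⟩, ht⟩, fun h => lt_irrefl _ h.1.2⟩

theorem isGapInterval (hp : IsGap L p) (hL : IsMaximalLamination f L) :
    IsGapInterval L p.1 p.2 (gapDepth L p) where
  nonneg_left := (hL.isChord hp.mem).nonneg
  right_le_one := (hL.isChord hp.mem).le_one
  nonneg_level := hp.gapDepth_nonneg hL
  not_crosses_left q hq := hL.isLamination.not_crosses q hq p hp.mem
  not_crosses_right q hq := hL.isLamination.not_crosses p hp.mem q hq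
  length_le _ hq hqp := le_gapDepth hq hqp
  separated q hq hlen := by
    by_contra! hcon
    obtain ⟨hpq, hqp, hnest⟩ := hcon
    have hlt := hp.gapDepth_lt
    rcases le_or_gt p.1 q.1 with h | h
    · have hlt' : p.2 < q.2 := not_le.1 fun h' => hnest ⟨hq, h, h'⟩
      exact hL.isLamination.not_crosses p hp.mem q hq ⟨by linarith, hqp, hlt'⟩
    · exact hL.isLamination.not_crosses q hq p hp.mem ⟨h, hpq, by linarith⟩

end IsGap

-- Disjoint boxes in the unit square of area at least `η ^ 2` are finite in number.
theorem IsMaximalLamination.finite_setOf_large_isGap (hL : IsMaximalLamination f L) {η : ℝ}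
    (hη : 0 < η) : {p | IsGap L p ∧ η ≤ p.2 - p.1 - gapDepth L p}.Finite := by
  set S := {p | IsGap L p ∧ η ≤ p.2 - p.1 - gapDepth L p}
  have hdisj (p q : S) (hpq : p ≠ q) : Disjoint (gapBox L p) (gapBox L q) :=
    hL.isLamination.disjoint_gapBox p.2.1.mem q.2.1.mem (Subtype.coe_ne_coe.2 hpq)
  have hsub : ⋃ p : S, gapBox L p ⊆ Icc 0 1 ×ˢ Icc 0 1 :=
    iUnion_subset fun p => subset_closure.trans (p.2.1.closure_gapBox_subset hL)
  have hvol (p : S) : ENNReal.ofReal η * ENNReal.ofReal η ≤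
      (MeasureTheory.volume : MeasureTheory.Measure (ℝ × ℝ)) (gapBox L p) := by
    have := p.2.2
    have := p.2.1.gapDepth_nonneg hL
    rw [gapBox, MeasureTheory.Measure.volume_eq_prod, MeasureTheory.Measure.prod_prod,
      Real.volume_Ioo, Real.volume_Ioo]
    gcongr
    linarith
  have hfin := MeasureTheory.Measure.finite_const_le_meas_of_disjoint_iUnion
    (MeasureTheory.volume : MeasureTheory.Measure (ℝ × ℝ))
    (ε := ENNReal.ofReal η * ENNReal.ofReal η) (by positivity)
    (fun p : S => (isOpen_gapBox L p).measurableSet) hdisj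
    (ne_top_of_le_ne_top ((isCompact_Icc.prod isCompact_Icc).measure_ne_top)
      (MeasureTheory.measure_mono hsub))
  exact Set.finite_coe_iff.1 (Set.finite_univ_iff.1 (hfin.subset fun p _ => hvol p))

end GapBoxes

section CollapseValues

open unitInterval

variable {X : Type*} [TopologicalSpace X] [T2Space X] {f : ℝ → X} {L : Set (ℝ × ℝ)}
  {p z : ℝ × ℝ} {s t : ℝ}

theorem collapse_zero_left (hf : Continuous f) (hL : IsMaximalLamination f L)
    (ht : t ∈ Icc (0 : ℝ) 1) : collapse f L 0 t = f t :=
  collapse_eq_self hf hL le_rfl ht fun _ _ hlen hlt => (sub_nonpos.1 hlen).trans hlt.le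

theorem collapse_fst (hf : Continuous f) (hL : IsMaximalLamination f L) (hp : p ∈ L)
    (hs : s ∈ Icc 0 (p.2 - p.1)) : collapse f L s p.1 = f p.1 := by
  have hchord := hL.isChord hp
  refine collapse_eq_self hf hL hs.1 ⟨hchord.nonneg, hchord.le.trans hchord.le_one⟩
    fun q hq hlen hlt => not_lt.1 fun hlt' => ?_
  exact hL.isLamination.not_crosses q hq p hp ⟨hlt, hlt', by linarith [hs.2]⟩

theorem collapse_snd (hf : Continuous f) (hL : IsMaximalLamination f L) (hp : p ∈ L)
    (hs : s ∈ Icc 0 (p.2 - p.1)) : collapse f L s p.2 = f p.1 := by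
  have hchord := hL.isChord hp
  rw [hchord.map_eq]
  refine collapse_eq_self hf hL hs.1 ⟨hchord.nonneg.trans hchord.le, hchord.le_one⟩
    fun q hq hlen hlt => not_lt.1 fun hlt' => ?_
  exact hL.isLamination.not_crosses p hp q hq ⟨by linarith [hs.2], hlt, hlt'⟩

theorem collapse_length (hf : Continuous f) (hL : IsMaximalLamination f L) (hp : p ∈ L)
    (ht : t ∈ Icc p.1 p.2) : collapse f L (p.2 - p.1) t = f p.1 := by
  have hle := (hL.isChord hp).le
  rw [collapse_eq_of_mem_chord hf hL hp le_rfl ht (left_mem_Icc.2 hle)]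
  exact collapse_fst hf hL hp (right_mem_Icc.2 (sub_nonneg.2 hle))

theorem IsGap.exists_isGapLoop (hp : IsGap L p) (hf : Continuous f)
    (hL : IsMaximalLamination f L) : ∃ γ, IsGapLoop f L p γ :=
  ⟨⟨_, (continuousOn_collapse hf hL).comp_continuous
    (f := fun t : I => (gapDepth L p, p.1 + t * (p.2 - p.1))) (by fun_prop)
    fun t => hp.bottom_mem_gapFree hL (add_mul_sub_mem_Icc hp.fst_lt_snd.le t)⟩, fun _ => rfl⟩

namespace IsGapLoop

variable {γ : C(I, X)}

theorem map_zero (hγ : IsGapLoop f L p γ) (hp : IsGap L p) (hf : Continuous f)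
    (hL : IsMaximalLamination f L) : γ 0 = f p.1 := by
  rw [hγ, Icc.coe_zero, zero_mul, add_zero]
  exact collapse_fst hf hL hp.mem ⟨hp.gapDepth_nonneg hL, hp.gapDepth_lt.le⟩

theorem map_one (hγ : IsGapLoop f L p γ) (hp : IsGap L p) (hf : Continuous f)
    (hL : IsMaximalLamination f L) : γ 1 = f p.1 := by
  rw [hγ, Icc.coe_one, one_mul, add_sub_cancel]
  exact collapse_snd hf hL hp.mem ⟨hp.gapDepth_nonneg hL, hp.gapDepth_lt.le⟩

theorem isJordanLoop (hγ : IsGapLoop f L p γ) (hp : IsGap L p) (hf : Continuous f)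
    (hL : IsMaximalLamination f L) : IsJordanLoop γ := by
  refine ⟨(hγ.map_zero hp hf hL).trans (hγ.map_one hp hf hL).symm, fun u v huv heq => ?_⟩
  have hlen : 0 < p.2 - p.1 := sub_pos.2 hp.fst_lt_snd
  have hmem := add_mul_sub_mem_Icc hp.fst_lt_snd.le
  have hle {u v : I} (huv : u ≤ v) : p.1 + u * (p.2 - p.1) ≤ p.1 + v * (p.2 - p.1) := by
    have huv' : (u : ℝ) ≤ v := huv
    gcongr
  rw [hγ, hγ] at heq
  rcases (hp.isGapInterval hL).eq_endpoints_or_forall_collapse_eq hf hL (hmem u).1 (hle huv)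
    (hmem v).2 heq with ⟨hu, hv⟩ | hconst
  · exact Or.inl ⟨Subtype.ext ((mul_eq_zero_iff_right hlen.ne').1 (add_eq_left.1 hu)),
      Subtype.ext (mul_right_cancel₀ hlen.ne' (by rw [Icc.coe_one]; linarith))⟩
  · refine Or.inr fun w hw => ?_
    rw [hγ, hγ]
    exact hconst _ ⟨hle hw.1, hle hw.2⟩

end IsGapLoop

end CollapseValues

section Gluing

open Filter

theorem inter_frontier_nonempty_of_isPreconnected {E : Type*} [TopologicalSpace E]
    {t U : Set E} (ht : IsPreconnected t) (hU : IsOpen U) (hin : (t ∩ U).Nonempty)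
    (hout : (t \ U).Nonempty) : (t ∩ frontier U).Nonempty := by
  by_contra! hempty
  rw [hU.frontier_eq] at hempty
  have hnot (x) (hx : x ∈ t) (hxU : x ∉ U) : x ∉ closure U := fun hxc =>
    (hempty ▸ ⟨hx, hxc, hxU⟩ : x ∈ (∅ : Set E))
  obtain ⟨y, hy, hyU⟩ := hout
  obtain ⟨z, -, hzU, hzc⟩ := ht U (closure U)ᶜ hU isClosed_closure.isOpen_compl
    (fun x hx => or_iff_not_imp_left.2 (hnot x hx)) hin ⟨y, hy, hnot y hy hyU⟩
  exact hzc (subset_closure hzU)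

-- Near a point of `A` only the finitely many pieces of large oscillation matter: a segment into
-- any other piece first meets its frontier, which lies in `A`.
theorem continuousOn_union_of_finite_large_oscillation {E ι X : Type*} [PseudoMetricSpace E]
    [PseudoMetricSpace X] (hE : ∀ (x : E) r, IsPreconnected (ball x r)) {A : Set E}
    (hA : IsClosed A) {U : ι → Set E} (hU : ∀ i, IsOpen (U i)) (hfr : ∀ i, frontier (U i) ⊆ A)
    (hdisj : ∀ i, Disjoint (U i) A) {F : E → X} (hFA : ContinuousOn F A)
    (hFU : ∀ i, ContinuousOn F (closure (U i)))
    (hfin : ∀ ε > 0,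
      {i | ∃ x ∈ closure (U i), ∃ y ∈ closure (U i), ε ≤ dist (F x) (F y)}.Finite) :
    ContinuousOn F (A ∪ ⋃ i, U i) := by
  rintro z (hz | hz)
  swap
  · obtain ⟨i, hi⟩ := mem_iUnion.1 hz
    exact ((hFU i).continuousAt
      (mem_of_superset ((hU i).mem_nhds hi) subset_closure)).continuousWithinAt
  refine Metric.continuousWithinAt_iff.2 fun ε hε => ?_
  set S := {i | ∃ x ∈ closure (U i), ∃ y ∈ closure (U i), ε / 2 ≤ dist (F x) (F y)}
  have : Finite S := hfin _ (half_pos hε)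
  have hcont : ContinuousOn F (A ∪ ⋃ i : S, closure (U i)) :=
    hFA.union_of_isClosed ((locallyFinite_of_finite _).continuousOn_iUnion
      (fun _ => isClosed_closure) fun i => hFU i) hA
      (isClosed_iUnion_of_finite fun _ => isClosed_closure)
  obtain ⟨δ, hδ, hclose⟩ :=
    Metric.continuousWithinAt_iff.1 (hcont z (Or.inl hz)) (ε / 2) (half_pos hε)
  refine ⟨δ, hδ, fun {w} hw hwz => ?_⟩
  rcases hw with hw | hw
  · exact (hclose (Or.inl hw) hwz).trans (half_lt_self hε)
  obtain ⟨i, hi⟩ := mem_iUnion.1 hw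
  by_cases hiS : i ∈ S
  · exact (hclose (Or.inr (mem_iUnion.2 ⟨⟨i, hiS⟩, subset_closure hi⟩)) hwz).trans (half_lt_self hε)
  · obtain ⟨v, hvz, hv⟩ := inter_frontier_nonempty_of_isPreconnected (hE z δ) (hU i)
      ⟨w, hwz, hi⟩ ⟨z, mem_ball_self hδ, fun h => (hdisj i).le_bot ⟨h, hz⟩⟩
    have hvz' : dist (F v) (F z) < ε / 2 := hclose (Or.inl (hfr i hv)) hvz
    have hwv : dist (F w) (F v) < ε / 2 := not_le.1 fun h =>
      hiS ⟨w, subset_closure hi, v, frontier_subset_closure hv, h⟩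
    linarith [dist_triangle (F w) (F v) (F z)]

end Gluing

section Filling

open unitInterval

/-- A null-homotopy, relative to the endpoints, of the loop `γ`; the first coordinate is time. -/
structure IsFilling {X : Type*} [TopologicalSpace X] (γ : C(I, X)) (H : C(I × I, X)) : Prop where
  bottom : ∀ t, H (0, t) = γ t
  top : ∀ t, H (1, t) = γ 0
  left : ∀ s, H (s, 0) = γ 0
  right : ∀ s, H (s, 1) = γ 0

/-- A set in which all Jordan loops can be filled, small ones by small fillings. -/
structure IsFillable {X : Type*} [MetricSpace X] (D : Set X) : Prop where
  exists_filling : ∀ γ, IsJordanLoop γ → range γ ⊆ D → ∃ H, IsFilling γ H ∧ range H ⊆ D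
  exists_small_filling : ∀ ε > 0, ∃ δ > 0, ∀ γ, IsJordanLoop γ → range γ ⊆ D →
    (∀ t, dist (γ t) (γ 0) < δ) → ∃ H, IsFilling γ H ∧ range H ⊆ D ∧ ∀ z, dist (H z) (γ 0) < ε

theorem isFilling_const {X : Type*} [TopologicalSpace X] {γ : C(I, X)} (h : ∀ t, γ t = γ 0) :
    IsFilling γ (.const (I × I) (γ 0)) :=
  ⟨fun t => (h t).symm, fun _ => rfl, fun _ => rfl, fun _ => rfl⟩

section Selection

variable {X : Type*} [MetricSpace X] {D : Set X}

theorem IsFilling.exists_almost_smallest {γ : C(I, X)}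
    (h : ∃ H, IsFilling γ H ∧ range H ⊆ D) :
    ∃ H, (IsFilling γ H ∧ range H ⊆ D) ∧ ∀ H', IsFilling γ H' ∧ range H' ⊆ D →
      dist H (.const _ (γ 0)) ≤ dist H' (.const _ (γ 0)) + dist γ (.const _ (γ 0)) := by
  by_cases hconst : γ = .const _ (γ 0)
  · refine ⟨.const _ (γ 0), ⟨isFilling_const fun t => DFunLike.congr_fun hconst t, ?_⟩,
      fun H' _ => ?_⟩
    · obtain ⟨H, hH, hHD⟩ := h
      rintro _ ⟨-, rfl⟩
      exact hHD ⟨(0, 0), hH.bottom 0⟩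
    · rw [dist_self]
      positivity
  · obtain ⟨H₀, hH₀⟩ := h
    set S := (fun H => dist H (.const (I × I) (γ 0))) '' {H | IsFilling γ H ∧ range H ⊆ D}
    have hbdd : BddBelow S := ⟨0, forall_mem_image.2 fun _ _ => dist_nonneg⟩
    obtain ⟨_, ⟨H, hH, rfl⟩, hlt⟩ := exists_lt_of_csInf_lt (s := S) ⟨_, H₀, hH₀, rfl⟩
      (lt_add_of_pos_right (sInf S) (dist_pos.2 hconst))
    exact ⟨H, hH, fun H' hH' => hlt.le.trans
      (add_le_add_left (csInf_le hbdd (mem_image_of_mem _ hH')) _)⟩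

theorem IsFillable.exists_selection (hD : IsFillable D) :
    ∃ K : C(I, X) → C(I × I, X),
      (∀ γ, IsJordanLoop γ → range γ ⊆ D → IsFilling γ (K γ) ∧ range (K γ) ⊆ D) ∧
      ∀ ε > 0, ∃ δ > 0, ∀ γ, IsJordanLoop γ → range γ ⊆ D → (∀ t, dist (γ t) (γ 0) < δ) →
        ∀ z, dist (K γ z) (γ 0) < ε := by
  have hexists (γ : C(I, X)) : ∃ H, IsJordanLoop γ → range γ ⊆ D →
      (IsFilling γ H ∧ range H ⊆ D) ∧ ∀ H', IsFilling γ H' ∧ range H' ⊆ D →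
        dist H (.const _ (γ 0)) ≤ dist H' (.const _ (γ 0)) + dist γ (.const _ (γ 0)) := by
    by_cases hγ : IsJordanLoop γ ∧ range γ ⊆ D
    · obtain ⟨H, hH⟩ := IsFilling.exists_almost_smallest (hD.exists_filling γ hγ.1 hγ.2)
      exact ⟨H, fun _ _ => hH⟩
    · exact ⟨.const _ (γ 0), fun h h' => absurd ⟨h, h'⟩ hγ⟩
  choose K hK using hexists
  refine ⟨K, fun γ hγ hγD => (hK γ hγ hγD).1, fun ε hε => ?_⟩
  obtain ⟨δ, hδ, hsmall⟩ := hD.exists_small_filling (ε / 2) (half_pos hε)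
  refine ⟨min δ (ε / 2), lt_min hδ (half_pos hε), fun γ hγ hγD hlt z => ?_⟩
  obtain ⟨H, hH, hHD, hHlt⟩ := hsmall γ hγ hγD fun t => (hlt t).trans_le (min_le_left _ _)
  have hHdist : dist H (.const _ (γ 0)) < ε / 2 :=
    (ContinuousMap.dist_lt_iff (half_pos hε)).2 hHlt
  have hγdist : dist γ (.const _ (γ 0)) < ε / 2 :=
    (ContinuousMap.dist_lt_iff (half_pos hε)).2 fun t => (hlt t).trans_le (min_le_right _ _)
  calc dist (K γ z) (γ 0) ≤ dist (K γ) (.const _ (γ 0)) :=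
        ContinuousMap.dist_apply_le_dist (g := .const _ (γ 0)) z
    _ ≤ dist H (.const _ (γ 0)) + dist γ (.const _ (γ 0)) := (hK γ hγ hγD).2 H ⟨hH, hHD⟩
    _ < ε := by linarith

end Selection

/-- The collapsed map, with the gap box of each chord `p` filled in by the map `K p`. -/
noncomputable def fillGaps {X : Type*} [TopologicalSpace X] (f : ℝ → X) (L : Set (ℝ × ℝ))
    (K : ℝ × ℝ → C(I × I, X)) (z : ℝ × ℝ) : X :=
  open Classical in
  if h : ∃ p ∈ L, z ∈ gapBox L p then K h.choose (gapCoord L h.choose z) else collapse f L z.1 z.2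

section FillGaps

variable {X : Type*} [TopologicalSpace X] {f : ℝ → X} {L : Set (ℝ × ℝ)}
  {K : ℝ × ℝ → C(I × I, X)} {g : ℝ × ℝ → C(I, X)} {p z : ℝ × ℝ}

theorem fillGaps_of_mem_gapFree (hz : z ∈ gapFree L) :
    fillGaps f L K z = collapse f L z.1 z.2 :=
  dif_neg fun ⟨_, hp, hzp⟩ => hz.2 (mem_iUnion₂.2 ⟨_, hp, hzp⟩)

theorem fillGaps_of_mem_gapBox (hL : IsLamination f L) (hp : p ∈ L) (hz : z ∈ gapBox L p) :
    fillGaps f L K z = K p (gapCoord L p z) := by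
  have h : ∃ p ∈ L, z ∈ gapBox L p := ⟨p, hp, hz⟩
  have hchoose : h.choose = p := by
    by_contra hne
    exact (hL.disjoint_gapBox h.choose_spec.1 hp hne).le_bot ⟨h.choose_spec.2, hz⟩
  rw [fillGaps, dif_pos h, hchoose]

theorem mem_gapFree_or_exists_mem_gapBox (L : Set (ℝ × ℝ)) (hz : z ∈ Icc 0 1 ×ˢ Icc 0 1) :
    z ∈ gapFree L ∨ ∃ p ∈ L, z ∈ gapBox L p :=
  or_iff_not_imp_right.2 fun h => ⟨hz, fun hz' => h (by simpa using mem_iUnion₂.1 hz')⟩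

variable [T2Space X]

theorem IsGapLoop.filling_gapCoord {γ : C(I, X)} {H : C(I × I, X)} (hγ : IsGapLoop f L p γ)
    (hH : IsFilling γ H) (hp : IsGap L p) (hf : Continuous f) (hL : IsMaximalLamination f L)
    (hz : z ∈ closure (gapBox L p)) (hz' : z ∉ gapBox L p) :
    H (gapCoord L p z) = collapse f L z.1 z.2 := by
  rw [hp.closure_gapBox] at hz
  obtain ⟨⟨hdepth, hlength⟩, hfst, hsnd⟩ := hz
  have hlen : 0 < p.2 - p.1 := sub_pos.2 hp.fst_lt_snd
  have hheight : 0 < p.2 - p.1 - gapDepth L p := sub_pos.2 hp.gapDepth_lt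
  have hz₁ : z.1 ∈ Icc 0 (p.2 - p.1) := ⟨(hp.gapDepth_nonneg hL).trans hdepth, hlength⟩
  have hγ₀ := hγ.map_zero hp hf hL
  rcases hfst.eq_or_lt with heq | hfst'
  · have hcoord : (gapCoord L p z).2 = 0 := by simp [gapCoord, ← heq]
    rw [← Prod.mk.eta (p := gapCoord L p z), hcoord, hH.left, hγ₀, ← heq,
      collapse_fst hf hL hp.mem hz₁]
  rcases hsnd.eq_or_lt with heq | hsnd'
  · have hcoord : (gapCoord L p z).2 = 1 := by simp [gapCoord, heq, div_self hlen.ne']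
    rw [← Prod.mk.eta (p := gapCoord L p z), hcoord, hH.right, hγ₀, heq,
      collapse_snd hf hL hp.mem hz₁]
  rcases hlength.eq_or_lt with heq | hlength'
  · have hcoord : (gapCoord L p z).1 = 1 := by simp [gapCoord, heq, div_self hheight.ne']
    rw [← Prod.mk.eta (p := gapCoord L p z), hcoord, hH.top, hγ₀, heq,
      collapse_length hf hL hp.mem ⟨hfst, hsnd⟩]
  rcases hdepth.eq_or_lt with heq | hdepth'
  · have hcoord : (gapCoord L p z).1 = 0 := by simp [gapCoord, ← heq]
    have hcoord' : ((gapCoord L p z).2 : ℝ) = (z.2 - p.1) / (p.2 - p.1) := by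
      rw [gapCoord, projIcc_of_mem zero_le_one
        ⟨div_nonneg (sub_nonneg.2 hfst) hlen.le, (div_le_one hlen).2 (by linarith)⟩]
    rw [← Prod.mk.eta (p := gapCoord L p z), hcoord, hH.bottom, hγ, hcoord',
      div_mul_cancel₀ _ hlen.ne', heq, add_sub_cancel]
  · exact absurd ⟨⟨hdepth', hlength'⟩, hfst', hsnd'⟩ hz'

theorem fillGaps_of_mem_closure_gapBox (hf : Continuous f) (hL : IsMaximalLamination f L)
    (hg : ∀ p, IsGap L p → IsGapLoop f L p (g p)) (hK : ∀ p, IsGap L p → IsFilling (g p) (K p))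
    (hp : IsGap L p) (hz : z ∈ closure (gapBox L p)) :
    fillGaps f L K z = K p (gapCoord L p z) := by
  by_cases hz' : z ∈ gapBox L p
  · exact fillGaps_of_mem_gapBox hL.isLamination hp.mem hz'
  · have hzfree : z ∈ gapFree L := hp.frontier_gapBox_subset hL
      ((isOpen_gapBox L p).frontier_eq ▸ ⟨hz, hz'⟩)
    rw [fillGaps_of_mem_gapFree hzfree, (hg p hp).filling_gapCoord (hK p hp) hp hf hL hz hz']

end FillGaps

section Continuity

variable {X : Type*} [MetricSpace X] {f : ℝ → X} {L : Set (ℝ × ℝ)}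
  {K : ℝ × ℝ → C(I × I, X)} {g : ℝ × ℝ → C(I, X)}

-- The loop at the bottom of a gap box is close to the constant loop at its top if the box is low.
theorem finite_setOf_large_isGapLoop (hf : Continuous f) (hL : IsMaximalLamination f L)
    (hg : ∀ p, IsGap L p → IsGapLoop f L p (g p)) {δ : ℝ} (hδ : 0 < δ) :
    {p | IsGap L p ∧ ∃ t, δ ≤ dist (g p t) (g p 0)}.Finite := by
  obtain ⟨η, hη, hclose⟩ := Metric.uniformContinuousOn_iff.1
    ((isCompact_gapFree L).uniformContinuousOn_of_continuous (continuousOn_collapse hf hL)) δ hδ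
  refine (hL.finite_setOf_large_isGap hη).subset fun p ⟨hp, t, ht⟩ => ⟨hp, ?_⟩
  contrapose! ht
  have htp := add_mul_sub_mem_Icc hp.fst_lt_snd.le t
  rw [(hg p hp).map_zero hp hf hL, hg p hp, ← collapse_length hf hL hp.mem htp]
  refine hclose _ (hp.bottom_mem_gapFree hL htp) _ (hp.top_mem_gapFree hL htp) ?_
  rw [Prod.dist_eq, dist_self, Real.dist_eq, abs_sub_comm,
    abs_of_pos (sub_pos.2 hp.gapDepth_lt)]
  exact max_lt ht hη

theorem continuousOn_fillGaps (hf : Continuous f) (hL : IsMaximalLamination f L)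
    (hg : ∀ p, IsGap L p → IsGapLoop f L p (g p)) (hK : ∀ p, IsGap L p → IsFilling (g p) (K p))
    (hfin : ∀ ε > 0, {p | IsGap L p ∧ ∃ z, ε ≤ dist (K p z) (g p 0)}.Finite) :
    ContinuousOn (fillGaps f L K) (Icc 0 1 ×ˢ Icc 0 1) := by
  have heq (p) (hp : IsGap L p) : ∀ z ∈ closure (gapBox L p),
      fillGaps f L K z = K p (gapCoord L p z) := fun z hz =>
    fillGaps_of_mem_closure_gapBox hf hL hg hK hp hz
  refine (continuousOn_union_of_finite_large_oscillation (A := gapFree L)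
    (U := fun p : {p // IsGap L p} => gapBox L p) (fun x r => (convex_ball x r).isPreconnected)
    (isCompact_gapFree L).isClosed (fun p => isOpen_gapBox L p)
    (fun p => p.2.frontier_gapBox_subset hL)
    (fun p => Set.disjoint_left.2 fun z hz hzfree => hzfree.2 (mem_iUnion₂.2 ⟨p, p.2.mem, hz⟩))
    ((continuousOn_collapse hf hL).congr fun z hz => fillGaps_of_mem_gapFree hz)
    (fun p => ((K p).continuous.comp (continuous_gapCoord L p)).continuousOn.congr (heq p p.2))
    fun ε hε => ?_).mono fun z hz => ?_
  · refine ((hfin (ε / 2) (half_pos hε)).preimage Subtype.val_injective.injOn).subset ?_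
    rintro p ⟨x, hx, y, hy, hxy⟩
    rw [heq p p.2 x hx, heq p p.2 y hy] at hxy
    refine ⟨p.2, ?_⟩
    by_contra! hsmall
    linarith [hsmall (gapCoord L p x), hsmall (gapCoord L p y),
      dist_triangle_right (K p (gapCoord L p x)) (K p (gapCoord L p y)) (g p 0)]
  · rcases mem_gapFree_or_exists_mem_gapBox L hz with h | ⟨p, hp, hzp⟩
    · exact Or.inl h
    · exact Or.inr (mem_iUnion.2 ⟨⟨p, isGap_of_mem_gapBox hp hzp⟩, hzp⟩)

theorem fillGaps_mem {D : Set X} (hf : Continuous f) (hL : IsMaximalLamination f L)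
    (hfD : f '' Icc 0 1 ⊆ D) (hKD : ∀ p, IsGap L p → range (K p) ⊆ D) {z : ℝ × ℝ}
    (hz : z ∈ Icc 0 1 ×ˢ Icc 0 1) : fillGaps f L K z ∈ D := by
  rcases mem_gapFree_or_exists_mem_gapBox L hz with h | ⟨p, hp, hzp⟩
  · rw [fillGaps_of_mem_gapFree h]
    exact hfD (collapse_mem_image hf hL hz.1.1 hz.2)
  · rw [fillGaps_of_mem_gapBox hL.isLamination hp hzp]
    exact hKD p (isGap_of_mem_gapBox hp hzp) ⟨_, rfl⟩

theorem fillGaps_of_notMem_Ioo_prod (hL : IsMaximalLamination f L) {z : ℝ × ℝ}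
    (hz : z ∈ Icc 0 1 ×ˢ Icc 0 1) (hz' : z ∉ Ioo 0 1 ×ˢ Ioo 0 1) :
    fillGaps f L K z = collapse f L z.1 z.2 := by
  refine fillGaps_of_mem_gapFree ((mem_gapFree_or_exists_mem_gapBox L hz).resolve_right ?_)
  rintro ⟨p, hp, hzp⟩
  have hgap := isGap_of_mem_gapBox hp hzp
  have hchord := hL.isChord hp
  obtain ⟨⟨hdepth, hlength⟩, hfst, hsnd⟩ := hzp
  exact hz' ⟨⟨(hgap.gapDepth_nonneg hL).trans_lt hdepth, by linarith [hchord.nonneg,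
    hchord.le_one]⟩, hchord.nonneg.trans_lt hfst, hsnd.trans_le hchord.le_one⟩

theorem isFilling_of_eq_fillGaps {γ : C(I, X)} {H : C(I × I, X)} (hloop : γ 0 = γ 1)
    (hf : Continuous f) (hfγ : ∀ t : I, f t = γ t) (hL : IsMaximalLamination f L)
    (hH : ∀ s t : I, H (s, t) = fillGaps f L K (s, t)) : IsFilling γ H := by
  have hf₀ : f 0 = γ 0 := hfγ 0
  have hf₁ : f 1 = γ 0 := (hfγ 1).trans hloop.symm
  have hbdry (s t : I) (h : ((s : ℝ), (t : ℝ)) ∉ Ioo (0 : ℝ) 1 ×ˢ Ioo (0 : ℝ) 1) :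
      H (s, t) = collapse f L s t :=
    (hH s t).trans (fillGaps_of_notMem_Ioo_prod hL ⟨s.2, t.2⟩ h)
  refine ⟨fun t => ?_, fun t => ?_, fun s => ?_, fun s => ?_⟩
  · rw [hbdry _ _ fun h => lt_irrefl _ h.1.1, Icc.coe_zero, collapse_zero_left hf hL t.2, hfγ]
  · have hcollapse := collapse_length hf hL (hL.zero_one_mem (hf₀.trans hf₁.symm)) t.2
    rw [sub_zero] at hcollapse
    rw [hbdry _ _ fun h => lt_irrefl _ h.1.2, Icc.coe_one, hcollapse, hf₀]
  · rw [hbdry _ _ fun h => lt_irrefl _ h.2.1, Icc.coe_zero, collapse_zero_right hf hL s.2.1, hf₀]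
  · rw [hbdry _ _ fun h => lt_irrefl _ h.2.2, Icc.coe_one, collapse_one_right hf hL s.2.1, hf₁]

end Continuity

theorem IsFillable.exists_filling_of_loop {X : Type*} [MetricSpace X] {D : Set X}
    (hD : IsFillable D) (γ : C(I, X)) (hloop : γ 0 = γ 1) (hγD : range γ ⊆ D) :
    ∃ H, IsFilling γ H ∧ range H ⊆ D := by
  obtain ⟨K, hK, hKsmall⟩ := hD.exists_selection
  set f : ℝ → X := IccExtend zero_le_one γ
  have hf : Continuous f := γ.continuous.Icc_extend'
  have hfD : f '' Icc 0 1 ⊆ D :=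
    (image_subset_range f _).trans ((IccExtend_range _ _).trans_subset hγD)
  obtain ⟨L, hL⟩ := IsLamination.exists_isMaximalLamination f
  have : Nonempty C(I, X) := ⟨γ⟩
  choose! g hg using fun p (hp : IsGap L p) => hp.exists_isGapLoop hf hL
  have hgJ (p) (hp : IsGap L p) : IsJordanLoop (g p) := (hg p hp).isJordanLoop hp hf hL
  have hgD (p) (hp : IsGap L p) : range (g p) ⊆ D := by
    rintro _ ⟨t, rfl⟩
    rw [hg p hp]
    exact hfD (collapse_mem_image hf hL (hp.gapDepth_nonneg hL)
      (hp.Icc_subset hL (add_mul_sub_mem_Icc hp.fst_lt_snd.le t)))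
  have hgK (p) (hp : IsGap L p) := hK (g p) (hgJ p hp) (hgD p hp)
  have hfin (ε) (hε : ε > 0) : {p | IsGap L p ∧ ∃ z, ε ≤ dist (K (g p) z) (g p 0)}.Finite := by
    obtain ⟨δ, hδ, hsmall⟩ := hKsmall ε hε
    refine (finite_setOf_large_isGapLoop hf hL hg hδ).subset fun p ⟨hp, z, hz⟩ => ⟨hp, ?_⟩
    by_contra! hlt
    exact (hsmall (g p) (hgJ p hp) (hgD p hp) hlt z).not_ge hz
  have hcont := continuousOn_fillGaps hf hL hg (fun p hp => (hgK p hp).1) hfin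
  let H : C(I × I, X) := ⟨fun z => fillGaps f L (K ∘ g) (z.1, z.2),
    hcont.comp_continuous (by fun_prop) fun z => ⟨z.1.2, z.2.2⟩⟩
  refine ⟨H, isFilling_of_eq_fillGaps hloop hf (IccExtend_val _ _) hL fun _ _ => rfl, ?_⟩
  rintro _ ⟨z, rfl⟩
  exact fillGaps_mem hf hL hfD (fun p hp => (hgK p hp).2) ⟨z.1.2, z.2.2⟩

end Filling

/-! ### Fillable sets -/

section FillableSets

open Topology unitInterval

theorem isFillable_empty {X : Type*} [MetricSpace X] : IsFillable (∅ : Set X) :=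
  ⟨fun _ _ h => (h ⟨0, rfl⟩).elim, fun _ _ => ⟨1, one_pos, fun _ _ h => (h ⟨0, rfl⟩).elim⟩⟩

theorem IsFillable.isSimplyConnected {X : Type*} [MetricSpace X] {D : Set X} (hD : IsFillable D)
    (hpath : IsPathConnected D) : IsSimplyConnected D := by
  refine isSimplyConnected_iff_exists_homotopy_refl_forall_mem.2 ⟨hpath, fun x p hpD => ?_⟩
  obtain ⟨H, hH, hHD⟩ := hD.exists_filling_of_loop p.toContinuousMap
    (p.source.trans p.target.symm) (range_subset_iff.2 hpD)
  refine ⟨⟨⟨H, hH.bottom, fun t => (hH.top t).trans p.source⟩, ?_⟩, fun z => hHD ⟨z, rfl⟩⟩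
  rintro s t (rfl | rfl)
  · exact hH.left s
  · exact (hH.right s).trans (p.source.trans p.target.symm)

theorem isFilling_lineMap {F : Type*} [AddCommGroup F] [Module ℝ F] [TopologicalSpace F]
    [IsTopologicalAddGroup F] [ContinuousSMul ℝ F] {γ : C(I, F)} (hloop : γ 0 = γ 1) :
    IsFilling γ ⟨fun z => AffineMap.lineMap (γ z.2) (γ 0) (z.1 : ℝ), by
      simp only [AffineMap.lineMap_apply_module]; fun_prop⟩ where
  bottom _ := AffineMap.lineMap_apply_zero _ _
  top _ := AffineMap.lineMap_apply_one _ _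
  left _ := AffineMap.lineMap_same_apply _ _
  right s := by
    rw [ContinuousMap.coe_mk, ← hloop]
    exact AffineMap.lineMap_same_apply _ _

section Embedding

variable {X Y : Type*} [TopologicalSpace X] [TopologicalSpace Y] {φ : Y → X}

theorem IsFilling.comp {γ : C(I, X)} {γ' : C(I, Y)} {H : C(I × I, Y)} (hH : IsFilling γ' H)
    (hφ : Continuous φ) (hγ : ∀ t, φ (γ' t) = γ t) : IsFilling γ (.comp ⟨φ, hφ⟩ H) where
  bottom t := (congrArg φ (hH.bottom t)).trans (hγ t)
  top t := (congrArg φ (hH.top t)).trans (hγ 0)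
  left s := (congrArg φ (hH.left s)).trans (hγ 0)
  right s := (congrArg φ (hH.right s)).trans (hγ 0)

theorem IsJordanLoop.of_comp {γ : C(I, X)} {γ' : C(I, Y)} (h : IsJordanLoop γ)
    (hφ : Function.Injective φ) (hγ : ∀ t, φ (γ' t) = γ t) : IsJordanLoop γ' where
  loop := hφ (by rw [hγ, hγ, h.loop])
  eq_endpoints_or_const u v huv heq :=
    (h.eq_endpoints_or_const u v huv (by rw [← hγ, ← hγ, heq])).imp_right fun hconst w hw =>
      hφ (by rw [hγ, hγ, hconst w hw])

theorem exists_lift_of_range_subset {Z : Type*} [TopologicalSpace Z] (hφ : IsEmbedding φ)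
    {γ : C(Z, X)} {D : Set Y} (hγ : range γ ⊆ φ '' D) :
    ∃ γ' : C(Z, Y), range γ' ⊆ D ∧ ∀ t, φ (γ' t) = γ t := by
  choose g hgD hg using fun t => hγ ⟨t, rfl⟩
  exact ⟨⟨g, hφ.continuous_iff.2 (γ.continuous.congr fun t => (hg t).symm)⟩,
    range_subset_iff.2 hgD, hg⟩

end Embedding

theorem isUniformEmbedding_of_compactSpace {X Y : Type*} [UniformSpace X] [UniformSpace Y]
    [CompactSpace Y] {φ : Y → X} (hφ : IsEmbedding φ) : IsUniformEmbedding φ where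
  injective := hφ.injective
  comap_uniformity := congrArg (@uniformity Y) <|
    unique_uniformity_of_compact (u := .comap φ inferInstance) hφ.eq_induced.symm rfl

theorem IsFillable.image {X Y : Type*} [MetricSpace X] [MetricSpace Y] {φ : Y → X} {D : Set Y}
    (hD : IsFillable D) (hφ : IsUniformEmbedding φ) : IsFillable (φ '' D) := by
  have hcont := hφ.uniformContinuous.continuous
  have hrange {H : C(I × I, Y)} (hHD : range H ⊆ D) : range (φ ∘ H) ⊆ φ '' D := by
    rw [range_comp]
    exact image_mono hHD
  refine ⟨fun γ hγ hγD => ?_, fun ε hε => ?_⟩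
  · obtain ⟨γ', hγ'D, hγ'⟩ := exists_lift_of_range_subset hφ.isEmbedding hγD
    obtain ⟨H, hH, hHD⟩ := hD.exists_filling γ' (hγ.of_comp hφ.injective hγ') hγ'D
    exact ⟨_, hH.comp hcont hγ', hrange hHD⟩
  · obtain ⟨ε', hε', hφε⟩ := Metric.uniformContinuous_iff.1 hφ.uniformContinuous ε hε
    obtain ⟨δ', hδ', hsmall⟩ := hD.exists_small_filling ε' hε'
    obtain ⟨δ, hδ, hφδ⟩ := (Metric.isUniformEmbedding_iff.1 hφ).2.2 δ' hδ'
    refine ⟨δ, hδ, fun γ hγ hγD hlt => ?_⟩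
    obtain ⟨γ', hγ'D, hγ'⟩ := exists_lift_of_range_subset hφ.isEmbedding hγD
    obtain ⟨H, hH, hHD, hHlt⟩ := hsmall γ' (hγ.of_comp hφ.injective hγ') hγ'D fun t =>
      hφδ (by rw [hγ', hγ']; exact hlt t)
    refine ⟨_, hH.comp hcont hγ', hrange hHD, fun z => ?_⟩
    rw [← hγ' 0]
    exact hφε (hHlt z)

/-- A connected, relatively open subset of `T` in which Jordan loops can be filled. -/
structure IsFillableRegion {X : Type*} [MetricSpace X] (T D : Set X) : Prop where
  isFillable : IsFillable D
  isPreconnected : IsPreconnected D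
  exists_isOpen : ∃ O, IsOpen O ∧ T ∩ O = D

namespace IsFillableRegion

variable {X Y : Type*} [MetricSpace X] [MetricSpace Y] {T D : Set X}

theorem empty (T : Set X) : IsFillableRegion T ∅ :=
  ⟨isFillable_empty, isPreconnected_empty, ∅, isOpen_empty, inter_empty T⟩

theorem subset (hD : IsFillableRegion T D) : D ⊆ T := by
  obtain ⟨O, -, rfl⟩ := hD.exists_isOpen
  exact inter_subset_left

theorem image {D : Set Y} (hD : IsFillableRegion univ D) {φ : Y → X}
    (hφ : IsUniformEmbedding φ) : IsFillableRegion (range φ) (φ '' D) := by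
  obtain ⟨O, hO, hOD⟩ := hD.exists_isOpen
  obtain ⟨O', hO', rfl⟩ := hφ.isEmbedding.isOpen_iff.1 hO
  rw [univ_inter] at hOD
  exact ⟨hD.isFillable.image hφ, hD.isPreconnected.image _
    hφ.isEmbedding.continuous.continuousOn, O', hO', by rw [← hOD, image_preimage_eq_range_inter]⟩

end IsFillableRegion

end FillableSets

/-! ### Spheres -/

section Arcs

open Filter Topology unitInterval

/-- Any three distinct points of `T` lie on an arc in `T`, in the given order. -/
def HasArcsThroughTriples {X : Type*} [TopologicalSpace X] (T : Set X) : Prop :=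
  ∀ ⦃a⦄, a ∈ T → ∀ ⦃u⦄, u ∈ T → ∀ ⦃b⦄, b ∈ T → a ≠ u → u ≠ b → a ≠ b →
    ∃ α : C(I, X), Function.Injective α ∧ α 0 = a ∧ α 1 = b ∧ u ∈ range α ∧ range α ⊆ T

theorem HasArcsThroughTriples.image {X Y : Type*} [TopologicalSpace X] [TopologicalSpace Y]
    {S : Set Y} (hS : HasArcsThroughTriples S) {φ : Y → X} (hφ : Continuous φ)
    (hinj : Function.Injective φ) : HasArcsThroughTriples (φ '' S) := by
  rintro _ ⟨a, ha, rfl⟩ _ ⟨u, hu, rfl⟩ _ ⟨b, hb, rfl⟩ hau hub hab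
  obtain ⟨α, hα, h₀, h₁, ⟨t, ht⟩, hαS⟩ :=
    hS ha hu hb (ne_of_apply_ne φ hau) (ne_of_apply_ne φ hub) (ne_of_apply_ne φ hab)
  exact ⟨.comp ⟨φ, hφ⟩ α, hinj.comp hα, congrArg φ h₀, congrArg φ h₁, ⟨t, congrArg φ ht⟩,
    range_subset_iff.2 fun s => mem_image_of_mem φ (hαS ⟨s, rfl⟩)⟩

theorem tendsto_cocompact_of_range_eq_compl {F Y : Type*} [TopologicalSpace F] [TopologicalSpace Y]
    [T2Space Y] [CompactSpace Y] {ψ : F → Y} {u : Y} (hψ : IsEmbedding ψ)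
    (hrange : range ψ = {u}ᶜ) : Tendsto ψ (cocompact F) (𝓝 u) := by
  have : T2Space F := hψ.t2Space
  rw [← coclosedCompact_eq_cocompact]
  exact ((OnePoint.equivOfIsEmbeddingOfRangeEq u ψ hψ hrange).continuous.tendsto' _ _
    (OnePoint.equivOfIsEmbeddingOfRangeEq_apply_infty _ _ _ _)).comp OnePoint.tendsto_coe_infty

section LineThroughInfinity

variable {F Y : Type*} [NormedAddCommGroup F] [NormedSpace ℝ F]

/-- The image under `ψ` of the affine line through `m` in direction `w`, closed up by the point
`u` at infinity; the parameter is inverted so that infinity has parameter `0`. -/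
noncomputable def lineThroughInfinity (ψ : F → Y) (u : Y) (m w : F) (t : ℝ) : Y :=
  if t = 0 then u else ψ (m + t⁻¹ • w)

variable {ψ : F → Y} {u : Y} {m w : F}

theorem lineThroughInfinity_zero : lineThroughInfinity ψ u m w 0 = u := if_pos rfl

theorem lineThroughInfinity_of_ne {t : ℝ} (ht : t ≠ 0) :
    lineThroughInfinity ψ u m w t = ψ (m + t⁻¹ • w) := if_neg ht

theorem injective_lineThroughInfinity (hψ : Function.Injective ψ) (hu : u ∉ range ψ)
    (hw : w ≠ 0) : Function.Injective (lineThroughInfinity ψ u m w) := by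
  have hne {t : ℝ} (ht : t ≠ 0) : lineThroughInfinity ψ u m w t ≠ u := fun h =>
    hu ⟨_, (lineThroughInfinity_of_ne ht).symm.trans h⟩
  intro s t hst
  rcases eq_or_ne s 0 with rfl | hs <;> rcases eq_or_ne t 0 with rfl | ht
  · rfl
  · exact (hne ht (hst.symm.trans lineThroughInfinity_zero)).elim
  · exact (hne hs (hst.trans lineThroughInfinity_zero)).elim
  · rw [lineThroughInfinity_of_ne hs, lineThroughInfinity_of_ne ht] at hst
    exact inv_injective (smul_left_injective ℝ hw (add_left_cancel (hψ hst)))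

theorem tendsto_add_inv_smul_cobounded (m : F) (hw : w ≠ 0) :
    Tendsto (fun t : ℝ => m + t⁻¹ • w) (𝓝[≠] 0) (Bornology.cobounded F) := by
  have hsmul : Tendsto (fun t : ℝ => t⁻¹ • w) (𝓝[≠] 0) (Bornology.cobounded F) := by
    rw [← tendsto_norm_atTop_iff_cobounded]
    simp only [norm_smul]
    exact (tendsto_norm_atTop_iff_cobounded.2 tendsto_inv₀_nhdsNE_zero).atTop_mul_const
      (norm_pos_iff.2 hw)
  exact tendsto_const_add_cobounded m |>.comp hsmul

variable [TopologicalSpace Y] [T2Space Y] [CompactSpace Y] [ProperSpace F]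

theorem continuous_lineThroughInfinity (hψ : IsEmbedding ψ) (hrange : range ψ = {u}ᶜ)
    (hw : w ≠ 0) : Continuous (lineThroughInfinity ψ u m w) := by
  refine continuous_iff_continuousAt.2 fun t => ?_
  rcases eq_or_ne t 0 with rfl | ht
  · rw [continuousAt_iff_punctured_nhds, lineThroughInfinity_zero]
    have hinfinity : Tendsto (fun t : ℝ => ψ (m + t⁻¹ • w)) (𝓝[≠] 0) (𝓝 u) :=
      (tendsto_cocompact_of_range_eq_compl hψ hrange).comp
        (Metric.cobounded_eq_cocompact (α := F) ▸ tendsto_add_inv_smul_cobounded m hw)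
    refine hinfinity.congr' ?_
    filter_upwards [self_mem_nhdsWithin] with t ht using (lineThroughInfinity_of_ne ht).symm
  · have hcont : ContinuousAt (fun t : ℝ => ψ (m + t⁻¹ • w)) t :=
      hψ.continuous.continuousAt.comp (by fun_prop (disch := exact ht))
    refine hcont.congr ?_
    filter_upwards [isOpen_ne.mem_nhds ht] with s hs using (lineThroughInfinity_of_ne hs).symm

end LineThroughInfinity

theorem hasArcsThroughTriples_of_isEmbedding_compl_singleton {F Y : Type*} [NormedAddCommGroup F]
    [NormedSpace ℝ F] [ProperSpace F] [TopologicalSpace Y] [T2Space Y] [CompactSpace Y]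
    (hψ : ∀ u : Y, ∃ ψ : F → Y, IsEmbedding ψ ∧ range ψ = {u}ᶜ) :
    HasArcsThroughTriples (univ : Set Y) := by
  intro a _ u _ b _ hau hub hab
  obtain ⟨ψ, hψ, hrange⟩ := hψ u
  obtain ⟨a, rfl⟩ : a ∈ range ψ := hrange ▸ hau
  obtain ⟨b, rfl⟩ : b ∈ range ψ := hrange ▸ hub.symm
  set m := (2⁻¹ : ℝ) • (a + b)
  set w := (2⁻¹ : ℝ) • (b - a)
  have hw : w ≠ 0 := smul_ne_zero (by norm_num) (sub_ne_zero.2 (ne_of_apply_ne ψ hab).symm)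
  have hcont := continuous_lineThroughInfinity (m := m) hψ hrange hw
  have hinj := injective_lineThroughInfinity (m := m) hψ.injective
    (hrange ▸ notMem_compl_iff.2 rfl : u ∉ range ψ) hw
  refine ⟨⟨fun t => lineThroughInfinity ψ u m w (2 * t - 1), by fun_prop⟩, fun s t h => ?_, ?_, ?_,
    ⟨⟨1 / 2, by norm_num, by norm_num⟩, ?_⟩, subset_univ _⟩
  · exact Subtype.ext (by linarith [hinj h])
  · rw [ContinuousMap.coe_mk, lineThroughInfinity_of_ne (by norm_num)]
    congr 1
    simp only [m, w, Icc.coe_zero, mul_zero, zero_sub, inv_neg, inv_one]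
    module
  · rw [ContinuousMap.coe_mk, lineThroughInfinity_of_ne (by norm_num)]
    congr 1
    simp only [m, w, Icc.coe_one]
    norm_num
    module
  · rw [ContinuousMap.coe_mk, mul_one_div_cancel two_ne_zero, sub_self, lineThroughInfinity_zero]

end Arcs

section ChordContraction

open unitInterval

variable {E : Type*} [NormedAddCommGroup E] [InnerProductSpace ℝ E]

theorem one_sub_sq_div_two_lt_inner_iff (x p : sphere (0 : E) 1) {r : ℝ} (hr : 0 < r) :
    1 - r ^ 2 / 2 < inner ℝ (x : E) p ↔ dist x p < r := by
  have hsq : dist x p ^ 2 = 2 - 2 * inner ℝ (x : E) p := by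
    rw [Subtype.dist_eq, dist_eq_norm, norm_sub_sq_real, norm_eq_of_mem_sphere,
      norm_eq_of_mem_sphere]
    ring
  rw [← sq_lt_sq₀ dist_nonneg hr.le, hsq]
  constructor <;> intro h <;> linarith

theorem lt_inner_lineMap {x y p : E} {c s : ℝ} (hx : c < inner ℝ x p) (hy : c < inner ℝ y p)
    (hs : s ∈ Icc 0 1) : c < inner ℝ (AffineMap.lineMap x y s) p :=
  (convex_halfSpace_gt (⟨fun _ _ => inner_add_left _ _ _, fun _ _ => real_inner_smul_left _ _ _⟩ :
    IsLinearMap ℝ fun v => inner ℝ v p) c).lineMap_mem hx hy hs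

theorem lineMap_ne_zero_of_inner_pos {x y p : E} {s : ℝ} (hx : 0 < inner ℝ x p)
    (hy : 0 < inner ℝ y p) (hs : s ∈ Icc 0 1) : AffineMap.lineMap x y s ≠ 0 := fun h =>
  (lt_inner_lineMap hx hy hs).ne' (by rw [h, inner_zero_left])

variable {Z : Type*} [TopologicalSpace Z] {γ : C(Z, sphere (0 : E) 1)} {y p : sphere (0 : E) 1}

/-- The contraction of a map `γ` into the open hemisphere centred at `p` to a point `y` of this
hemisphere, by radial projection of the chords from `γ z` to `y`. -/
noncomputable def chordContraction (γ : C(Z, sphere (0 : E) 1)) (y p : sphere (0 : E) 1)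
    (hy : 0 < inner ℝ (y : E) p) (hγ : ∀ z, 0 < inner ℝ (γ z : E) p) :
    C(I × Z, sphere (0 : E) 1) where
  toFun w := ⟨(‖AffineMap.lineMap (γ w.2 : E) (y : E) (w.1 : ℝ)‖⁻¹ : ℝ) •
      AffineMap.lineMap (γ w.2 : E) (y : E) (w.1 : ℝ), mem_sphere_zero_iff_norm.2
    (norm_smul_inv_norm (𝕜 := ℝ) (lineMap_ne_zero_of_inner_pos (hγ w.2) hy w.1.2))⟩
  continuous_toFun := by
    have hcont : Continuous fun w : I × Z => AffineMap.lineMap (γ w.2 : E) (y : E) (w.1 : ℝ) := by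
      simp only [AffineMap.lineMap_apply_module]
      fun_prop
    exact ((hcont.norm.inv₀ fun w => norm_ne_zero_iff.2
      (lineMap_ne_zero_of_inner_pos (hγ w.2) hy w.1.2)).smul hcont).subtype_mk _

section

variable {hy : 0 < inner ℝ (y : E) p} {hγ : ∀ z, 0 < inner ℝ (γ z : E) p}

theorem chordContraction_eq_of_lineMap_eq {s : I} {z : Z} {x : sphere (0 : E) 1}
    (h : AffineMap.lineMap (γ z : E) (y : E) (s : ℝ) = (x : E)) :
    chordContraction γ y p hy hγ (s, z) = x := by
  refine Subtype.ext ?_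
  change ‖AffineMap.lineMap (γ z : E) (y : E) (s : ℝ)‖⁻¹ •
    AffineMap.lineMap (γ z : E) (y : E) (s : ℝ) = (x : E)
  rw [h, norm_eq_of_mem_sphere, inv_one, one_smul]

theorem chordContraction_zero (z : Z) : chordContraction γ y p hy hγ (0, z) = γ z :=
  chordContraction_eq_of_lineMap_eq (AffineMap.lineMap_apply_zero _ _)

theorem chordContraction_one (z : Z) : chordContraction γ y p hy hγ (1, z) = y :=
  chordContraction_eq_of_lineMap_eq (AffineMap.lineMap_apply_one _ _)

theorem chordContraction_of_eq {z : Z} (h : γ z = y) (s : I) :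
    chordContraction γ y p hy hγ (s, z) = y :=
  chordContraction_eq_of_lineMap_eq (by rw [h, AffineMap.lineMap_same_apply])

-- Radial projection moves chords outwards, hence further into any cap `{c < ⟪·, q⟫}` with `0 ≤ c`.
theorem lt_inner_chordContraction {q : sphere (0 : E) 1} {c : ℝ} (hc : 0 ≤ c)
    (hyq : c < inner ℝ (y : E) q) (hγq : ∀ z, c < inner ℝ (γ z : E) q) (w : I × Z) :
    c < inner ℝ (chordContraction γ y p hy hγ w : E) q := by
  change c < inner ℝ (‖AffineMap.lineMap (γ w.2 : E) (y : E) (w.1 : ℝ)‖⁻¹ •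
    AffineMap.lineMap (γ w.2 : E) (y : E) (w.1 : ℝ)) (q : E)
  rw [real_inner_smul_left]
  have hchord : c < inner ℝ (AffineMap.lineMap (γ w.2 : E) (y : E) (w.1 : ℝ)) (q : E) :=
    lt_inner_lineMap (hγq w.2) hyq w.1.2
  refine hchord.trans_le (le_mul_of_one_le_left (hc.trans hchord.le) ?_)
  have hball : AffineMap.lineMap (γ w.2 : E) (y : E) (w.1 : ℝ) ∈ closedBall (0 : E) 1 :=
    (convex_closedBall 0 1).lineMap_mem (sphere_subset_closedBall (γ w.2).2)
      (sphere_subset_closedBall y.2) w.1.2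
  exact (one_le_inv₀ (norm_pos_iff.2 (lineMap_ne_zero_of_inner_pos (hγ w.2) hy w.1.2))).2
    (mem_closedBall_zero_iff.1 hball)

end

theorem zero_le_one_sub_sq_div_two {r : ℝ} (hr : 0 < r) (hr' : r ≤ 1) : 0 ≤ 1 - r ^ 2 / 2 := by
  nlinarith

theorem isPreconnected_ball_of_le_one (p : sphere (0 : E) 1) {r : ℝ} (hr : r ≤ 1) :
    IsPreconnected (ball p r) := by
  rcases le_or_gt r 0 with hr₀ | hr₀
  · rw [ball_eq_empty.2 hr₀]
    exact isPreconnected_empty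
  have hcap := zero_le_one_sub_sq_div_two hr₀ hr
  have hp := (one_sub_sq_div_two_lt_inner_iff p p hr₀).2 (mem_ball_self hr₀)
  refine isPreconnected_of_forall p fun y hy => ?_
  have hy := (one_sub_sq_div_two_lt_inner_iff y p hr₀).2 hy
  set H := chordContraction (.const Unit y) p p (hcap.trans_lt hp) fun _ => hcap.trans_lt hy
  refine ⟨range fun s : I => H (s, ()), range_subset_iff.2 fun s => ?_,
    ⟨1, chordContraction_one ()⟩, ⟨0, chordContraction_zero ()⟩, isPreconnected_range (by fun_prop)⟩
  exact (one_sub_sq_div_two_lt_inner_iff _ p hr₀).1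
    (lt_inner_chordContraction hcap hp (fun _ => hy) (s, ()))

theorem exists_filling_of_range_subset_ball {p : sphere (0 : E) 1} {r : ℝ} (hr : r ≤ 1)
    {γ : C(I, sphere (0 : E) 1)} (hloop : γ 0 = γ 1) (hγ : range γ ⊆ ball p r) :
    ∃ H, IsFilling γ H ∧ range H ⊆ ball p r ∧
      ∀ δ ≤ 1, (∀ t, dist (γ t) (γ 0) < δ) → ∀ z, dist (H z) (γ 0) < δ := by
  have hr₀ : 0 < r := nonempty_ball.1 ⟨_, hγ ⟨0, rfl⟩⟩
  have hcap := zero_le_one_sub_sq_div_two hr₀ hr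
  have hinner (t) := (one_sub_sq_div_two_lt_inner_iff (γ t) p hr₀).2 (hγ ⟨t, rfl⟩)
  set H := chordContraction γ (γ 0) p (hcap.trans_lt (hinner 0)) fun t => hcap.trans_lt (hinner t)
  refine ⟨H, ⟨chordContraction_zero, chordContraction_one, chordContraction_of_eq rfl,
    chordContraction_of_eq hloop.symm⟩, range_subset_iff.2 fun z => ?_, fun δ hδ hγδ z => ?_⟩
  · exact (one_sub_sq_div_two_lt_inner_iff _ p hr₀).1
      (lt_inner_chordContraction hcap (hinner 0) hinner z)
  · have hδ₀ : 0 < δ := dist_nonneg.trans_lt (hγδ 0)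
    have hclose (t) := (one_sub_sq_div_two_lt_inner_iff (γ t) (γ 0) hδ₀).2 (hγδ t)
    exact (one_sub_sq_div_two_lt_inner_iff _ (γ 0) hδ₀).1
      (lt_inner_chordContraction (zero_le_one_sub_sq_div_two hδ₀ hδ) (hclose 0) hclose z)

end ChordContraction

section JordanLoops

open Topology unitInterval

theorem exists_filling_of_range_subset_range {F Y : Type*} [AddCommGroup F] [Module ℝ F]
    [TopologicalSpace F] [IsTopologicalAddGroup F] [ContinuousSMul ℝ F] [TopologicalSpace Y]
    {ψ : F → Y} (hψ : IsEmbedding ψ) {γ : C(I, Y)} (hloop : γ 0 = γ 1) (hγ : range γ ⊆ range ψ) :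
    ∃ H, IsFilling γ H := by
  obtain ⟨γ', -, hγ'⟩ := exists_lift_of_range_subset hψ (hγ.trans image_univ.superset)
  have hloop' : γ' 0 = γ' 1 := hψ.injective (by rw [hγ', hγ', hloop])
  exact ⟨_, (isFilling_lineMap hloop').comp hψ.continuous hγ'⟩

variable {Y : Type*} [TopologicalSpace Y] [T2Space Y]

theorem exists_mem_Icc_notMem_pair {γ : C(I, Y)} {a c : I} (hac : a ≤ c) (hne : γ a ≠ γ c)
    (x y : Y) : ∃ t ∈ Icc a c, γ t ∉ ({x, y} : Set Y) := by
  by_contra! hpair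
  have hnontrivial : (γ '' Icc a c).Nontrivial :=
    ⟨γ a, mem_image_of_mem γ (left_mem_Icc.2 hac), γ c, mem_image_of_mem γ (right_mem_Icc.2 hac),
      hne⟩
  exact (isPreconnected_Icc.image γ γ.continuous.continuousOn).infinite_of_nontrivial hnontrivial
    ((toFinite {x, y}).subset (image_subset_iff.2 hpair))

-- A surjective Jordan loop would be cut by two of its points.
theorem IsJordanLoop.not_surjective [Nontrivial Y]
    (hY : ∀ x y : Y, x ≠ y → IsPreconnected ({x, y}ᶜ : Set Y)) {γ : C(I, Y)}
    (h : IsJordanLoop γ) : ¬ Function.Surjective γ := by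
  intro hsurj
  obtain ⟨y, hy⟩ := exists_ne (γ 0)
  obtain ⟨b, rfl⟩ := hsurj y
  have hclosed (s : Set I) (hs : IsClosed s) : IsClosed (γ '' s) :=
    (hs.isCompact.image γ.continuous).isClosed
  have hcover : ({γ 0, γ b}ᶜ : Set Y) ⊆ γ '' Icc 0 b ∪ γ '' Icc b 1 := by
    rw [← image_union, Icc_union_Icc_eq_Icc nonneg' le_one', ← univ_eq_Icc, image_univ,
      hsurj.range_eq]
    exact subset_univ _
  obtain ⟨t₁, ht₁, ht₁'⟩ := exists_mem_Icc_notMem_pair b.2.1 hy.symm (γ 0) (γ b)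
  obtain ⟨t₂, ht₂, ht₂'⟩ := exists_mem_Icc_notMem_pair b.2.2 (h.loop ▸ hy) (γ 0) (γ b)
  obtain ⟨_, hx, ⟨u, hu, rfl⟩, v, hv, huv⟩ := isPreconnected_closed_iff.1 (hY _ _ hy.symm) _ _
    (hclosed _ isClosed_Icc) (hclosed _ isClosed_Icc) hcover ⟨γ t₁, ht₁', t₁, ht₁, rfl⟩
    ⟨γ t₂, ht₂', t₂, ht₂, rfl⟩
  rcases h.eq_endpoints_or_const u v (hu.2.trans hv.1) huv.symm with ⟨rfl, -⟩ | hconst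
  · exact hx (Or.inl rfl)
  · exact hx (Or.inr (hconst b ⟨hu.2, hv.1⟩).symm)

end JordanLoops

section UnitSphere

open Module Topology unitInterval

variable {E : Type*} [NormedAddCommGroup E] [InnerProductSpace ℝ E]

theorem exists_isEmbedding_range_eq_compl_singleton {n : ℕ} [Fact (finrank ℝ E = n + 1)]
    (u : sphere (0 : E) 1) :
    ∃ ψ : EuclideanSpace ℝ (Fin n) → sphere (0 : E) 1, IsEmbedding ψ ∧ range ψ = {u}ᶜ := by
  refine ⟨(stereographic' n u).symm, ((stereographic' n u).symm.isOpenEmbedding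
    (stereographic'_target u)).isEmbedding, ?_⟩
  rw [← image_univ, ← stereographic'_target u, OpenPartialHomeomorph.symm_image_target_eq_source,
    stereographic'_source]

theorem hasArcsThroughTriples_unitSphere {n : ℕ} [Fact (finrank ℝ E = n + 1)] :
    HasArcsThroughTriples (univ : Set (sphere (0 : E) 1)) := by
  have : FiniteDimensional ℝ E := .of_fact_finrank_eq_succ n
  exact hasArcsThroughTriples_of_isEmbedding_compl_singleton
    exists_isEmbedding_range_eq_compl_singleton (F := EuclideanSpace ℝ (Fin n))

theorem isPreconnected_compl_pair_unitSphere {n : ℕ} [Fact (finrank ℝ E = n + 1)] (hn : 2 ≤ n)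
    {x y : sphere (0 : E) 1} (hxy : x ≠ y) :
    IsPreconnected ({x, y}ᶜ : Set (sphere (0 : E) 1)) := by
  obtain ⟨ψ, hψ, hrange⟩ := exists_isEmbedding_range_eq_compl_singleton (n := n) x
  obtain ⟨y, rfl⟩ : y ∈ range ψ := hrange ▸ hxy.symm
  have hrank : 1 < Module.rank ℝ (EuclideanSpace ℝ (Fin n)) := by
    rw [← finrank_eq_rank, finrank_euclideanSpace_fin]
    exact_mod_cast hn
  convert (isConnected_compl_singleton_of_one_lt_rank hrank y).isPreconnected.image ψ
    hψ.continuous.continuousOn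
  rw [image_compl_eq_range_sdiff_image hψ.injective, hrange, image_singleton, sdiff_eq,
    insert_eq, compl_union]

theorem IsJordanLoop.not_surjective_unitSphere {n : ℕ} [Fact (finrank ℝ E = n + 1)] (hn : 2 ≤ n)
    {γ : C(I, sphere (0 : E) 1)} (h : IsJordanLoop γ) : ¬ Function.Surjective γ := by
  obtain ⟨ψ, -, hrange⟩ := exists_isEmbedding_range_eq_compl_singleton (n := n) (γ 0)
  have hψ : ψ 0 ≠ γ 0 := mem_compl_singleton_iff.1 (hrange ▸ mem_range_self 0)
  have : Nontrivial (sphere (0 : E) 1) := ⟨_, _, hψ⟩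
  exact h.not_surjective fun x y => isPreconnected_compl_pair_unitSphere hn

theorem isFillableRegion_univ_unitSphere {n : ℕ} [Fact (finrank ℝ E = n + 1)] (hn : 2 ≤ n) :
    IsFillableRegion (univ : Set (sphere (0 : E) 1)) univ where
  isPreconnected := by
    have hrank : 1 < Module.rank ℝ E := by
      have : FiniteDimensional ℝ E := .of_fact_finrank_eq_succ n
      rw [← finrank_eq_rank, Fact.out (p := finrank ℝ E = n + 1)]
      exact_mod_cast Nat.lt_succ_of_lt hn
    have := isPreconnected_iff_preconnectedSpace.1 (isPreconnected_sphere hrank (0 : E) 1)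
    exact isPreconnected_univ
  exists_isOpen := ⟨univ, isOpen_univ, univ_inter _⟩
  isFillable := by
    refine ⟨fun γ hγ _ => ?_, fun ε hε => ⟨min ε 1, by positivity, fun γ hγ _ hlt => ?_⟩⟩
    · obtain ⟨u, hu⟩ := not_forall.1 (hγ.not_surjective_unitSphere hn)
      obtain ⟨ψ, hψ, hrange⟩ := exists_isEmbedding_range_eq_compl_singleton (n := n) u
      obtain ⟨H, hH⟩ := exists_filling_of_range_subset_range hψ hγ.loop
        (hrange ▸ subset_compl_singleton_iff.2 hu)
      exact ⟨H, hH, subset_univ _⟩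
    · obtain ⟨H, hH, hball, -⟩ := exists_filling_of_range_subset_ball (min_le_right ε 1) hγ.loop
        (range_subset_iff.2 hlt)
      exact ⟨H, hH, subset_univ _, fun z => (hball ⟨z, rfl⟩).trans_le (min_le_left _ _)⟩

theorem isFillableRegion_ball {p : sphere (0 : E) 1} {r : ℝ} (hr : r ≤ 1) :
    IsFillableRegion univ (ball p r) where
  isPreconnected := isPreconnected_ball_of_le_one p hr
  exists_isOpen := ⟨_, isOpen_ball, univ_inter _⟩
  isFillable := by
    refine ⟨fun γ hγ hball => ?_, fun ε hε => ⟨min ε 1, by positivity, fun γ hγ hball hlt => ?_⟩⟩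
    · obtain ⟨H, hH, hHball, -⟩ := exists_filling_of_range_subset_ball hr hγ.loop hball
      exact ⟨H, hH, hHball⟩
    · obtain ⟨H, hH, hHball, hHlt⟩ := exists_filling_of_range_subset_ball hr hγ.loop hball
      exact ⟨H, hH, hHball, fun z => (hHlt _ (min_le_right _ _) hlt z).trans_le (min_le_left _ _)⟩

end UnitSphere

section TopologicalSphere

open EuclideanSpace Topology

/-- `T` is homeomorphic to the unit sphere of `ℝⁿ⁺¹` for some `n ≥ 2`. -/
def IsTopologicalSphere {X : Type*} [TopologicalSpace X] (T : Set X) : Prop :=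
  ∃ n ≥ 2, Nonempty (T ≃ₜ sphere (0 : EuclideanSpace ℝ (Fin (n + 1))) 1)

namespace IsTopologicalSphere

theorem exists_isEmbedding {X : Type*} [TopologicalSpace X] {T : Set X}
    (hT : IsTopologicalSphere T) :
    ∃ n ≥ 2, ∃ φ : sphere (0 : EuclideanSpace ℝ (Fin (n + 1))) 1 → X,
      IsEmbedding φ ∧ range φ = T := by
  obtain ⟨n, hn, ⟨e⟩⟩ := hT
  refine ⟨n, hn, _, IsEmbedding.subtypeVal.comp e.symm.isEmbedding, ?_⟩
  rw [e.symm.surjective.range_comp, Subtype.range_coe]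

theorem isClosed {X : Type*} [TopologicalSpace X] [T2Space X] {T : Set X}
    (hT : IsTopologicalSphere T) : IsClosed T := by
  obtain ⟨n, -, φ, hφ, rfl⟩ := hT.exists_isEmbedding
  exact (isCompact_range hφ.continuous).isClosed

theorem hasArcsThroughTriples {X : Type*} [TopologicalSpace X] {T : Set X}
    (hT : IsTopologicalSphere T) : HasArcsThroughTriples T := by
  obtain ⟨n, -, φ, hφ, rfl⟩ := hT.exists_isEmbedding
  rw [← image_univ]
  exact (hasArcsThroughTriples_unitSphere (n := n)).image hφ.continuous hφ.injective

variable {X : Type*} [MetricSpace X] {T : Set X}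

theorem isFillableRegion (hT : IsTopologicalSphere T) : IsFillableRegion T T := by
  obtain ⟨n, hn, φ, hφ, rfl⟩ := hT.exists_isEmbedding
  simpa only [image_univ] using
    (isFillableRegion_univ_unitSphere hn).image (isUniformEmbedding_of_compactSpace hφ)

theorem exists_isFillableRegion (hT : IsTopologicalSphere T) {q : X} (hq : q ∈ T) {U : Set X}
    (hU : IsOpen U) (hqU : q ∈ U) : ∃ D, IsFillableRegion T D ∧ q ∈ D ∧ D ⊆ U := by
  obtain ⟨n, -, φ, hφ, rfl⟩ := hT.exists_isEmbedding
  obtain ⟨q, rfl⟩ := hq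
  obtain ⟨r, hr, hrU⟩ := Metric.isOpen_iff.1 (hU.preimage hφ.continuous) q hqU
  exact ⟨φ '' ball q (min r 1),
    (isFillableRegion_ball (min_le_right r 1)).image (isUniformEmbedding_of_compactSpace hφ),
    mem_image_of_mem φ (mem_ball_self (by positivity)),
    image_subset_iff.2 ((ball_subset_ball (min_le_left r 1)).trans hrU)⟩

end IsTopologicalSphere

end TopologicalSphere

/-! ### Maximal cyclic sets -/

section CyclicallyConnected

variable {X : Type} [TopologicalSpace X]

theorem IsJordanCurve.isPreconnected {J : Set X} (hJ : IsJordanCurve J) : IsPreconnected J := by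
  obtain ⟨e⟩ := hJ
  have hrange : range (Subtype.val ∘ e) = J := by
    rw [e.surjective.range_comp, Subtype.range_coe]
  exact hrange ▸ isPreconnected_range (continuous_subtype_val.comp e.continuous)

theorem IsJordanCurve.not_subsingleton {J : Set X} (hJ : IsJordanCurve J) : ¬ J.Subsingleton := by
  obtain ⟨e⟩ := hJ
  have : Fact ((0 : ℝ) < 1) := ⟨one_pos⟩
  intro hsub
  have heq : ((0 : ℝ) : AddCircle (1 : ℝ)) = ((1 / 2 : ℝ) : AddCircle (1 : ℝ)) :=
    e.injective (Subtype.ext (hsub (e _).2 (e _).2))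
  rw [AddCircle.coe_eq_coe_iff_of_mem_Ico (a := 0) (by norm_num) (by norm_num)] at heq
  norm_num at heq

theorem IsJordanCurve.cyclicallyConnected {J : Set X} (hJ : IsJordanCurve J) :
    CyclicallyConnected J := fun _ hx _ hy => ⟨J, Subset.rfl, hJ, hx, hy⟩

theorem CyclicallyConnected.isPreconnected {C : Set X} (hC : CyclicallyConnected C) :
    IsPreconnected C := isPreconnected_of_forall_pair fun x hx y hy => by
  obtain ⟨J, hJC, hJ, hxJ, hyJ⟩ := hC x hx y hy
  exact ⟨J, hJC, hxJ, hyJ, hJ.isPreconnected⟩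

theorem CyclicallyConnected.sUnion {c : Set (Set X)} (hc : ∀ C ∈ c, CyclicallyConnected C)
    (hdir : DirectedOn (· ⊆ ·) c) : CyclicallyConnected (⋃₀ c) := by
  rintro x ⟨C, hC, hxC⟩ y ⟨C', hC', hyC'⟩
  obtain ⟨D, hD, hCD, hC'D⟩ := hdir C hC C' hC'
  obtain ⟨J, hJD, hJ⟩ := hc D hD x (hCD hxC) y (hC'D hyC')
  exact ⟨J, hJD.trans (subset_sUnion_of_mem hD), hJ⟩

theorem IsJordanCurve.exists_maximalCyclic {J : Set X} (hJ : IsJordanCurve J) :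
    ∃ T, MaximalCyclic T ∧ J ⊆ T := by
  obtain ⟨T, hJT, hT⟩ := zorn_subset_nonempty {C : Set X | CyclicallyConnected C}
    (fun c hc hchain _ => ⟨⋃₀ c, .sUnion hc hchain.directedOn, fun _ => subset_sUnion_of_mem⟩)
    J hJ.cyclicallyConnected
  exact ⟨T, ⟨fun hsub => hJ.not_subsingleton (hsub.anti hJT), hT.1,
    fun C hC hTC => (hT.2 hC hTC).antisymm hTC⟩, hJT⟩

end CyclicallyConnected

section Arcs

open unitInterval

theorem eq_zero_and_eq_one_of_trans_symm_eq {X : Type*} [TopologicalSpace X] {a b : X}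
    {p q : Path a b} (hp : Function.Injective p) (hq : Function.Injective q)
    (hpq : ∀ s t, p s = q t → s = 0 ∨ s = 1) {u v : I} (huv : u < v)
    (heq : p.trans q.symm u = p.trans q.symm v) : u = 0 ∧ v = 1 := by
  have huv' : (u : ℝ) < v := huv
  rw [Path.trans_apply, Path.trans_apply] at heq
  split_ifs at heq with hu hv hv
  · have heq := congrArg Subtype.val (hp heq)
    dsimp only at heq
    linarith
  · rcases hpq _ _ heq with hend | hend
    · have hv₁ := hq (heq.symm.trans ((congrArg p hend).trans (p.source.trans q.source.symm)))
      rw [Subtype.ext_iff] at hend hv₁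
      simp only [coe_symm_eq, Icc.coe_zero] at hend hv₁
      exact ⟨Subtype.ext (by linarith : (u : ℝ) = 0), Subtype.ext (by linarith : (v : ℝ) = 1)⟩
    · have hv₀ := hq (heq.symm.trans ((congrArg p hend).trans (p.target.trans q.target.symm)))
      rw [Subtype.ext_iff] at hv₀
      simp only [coe_symm_eq, Icc.coe_one] at hv₀
      linarith
  · linarith
  · have heq := congrArg Subtype.val (symm_inj.1 (hq heq))
    dsimp only at heq
    linarith

variable {X : Type} [TopologicalSpace X] [T2Space X]

theorem isJordanCurve_range_union_range {α β : C(I, X)} (hα : Function.Injective α)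
    (hβ : Function.Injective β) (h₀ : α 0 = β 0) (h₁ : α 1 = β 1)
    (h : ∀ s t, α s = β t → s = 0 ∨ s = 1) : IsJordanCurve (range α ∪ range β) := by
  let p : Path (α 0) (α 1) := ⟨α, rfl, rfl⟩
  let q : Path (α 0) (α 1) := ⟨β, h₀.symm, h₁.symm⟩
  have hrange : range (p.trans q.symm) = range α ∪ range β := by
    rw [Path.trans_range, Path.symm_range]
    rfl
  rw [← hrange]
  exact isJordanCurve_range (p.trans q.symm).toContinuousMap
    ((p.trans q.symm).source.trans (p.trans q.symm).target.symm)
    fun u v => eq_zero_and_eq_one_of_trans_symm_eq hα hβ h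

theorem HasArcsThroughTriples.exists_isJordanCurve {T : Set X} (hT : HasArcsThroughTriples T)
    (hinf : T.Infinite) {γ : C(I, X)} (hγ : Function.Injective γ) (h₀ : γ 0 ∈ T) (h₁ : γ 1 ∈ T)
    (hγT : ∀ t, γ t ∈ T → t = 0 ∨ t = 1) {x : X} (hx : x ∈ T ∪ range γ) :
    ∃ J ⊆ T ∪ range γ, IsJordanCurve J ∧ x ∈ J ∧ range γ ⊆ J := by
  obtain ⟨u, huT, hu, hxu⟩ : ∃ u ∈ T, u ∉ ({γ 0, γ 1} : Set X) ∧ x ∈ insert u (range γ) := by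
    by_cases hxγ : x ∈ range γ
    · obtain ⟨u, huT, hu⟩ := hinf.exists_notMem_finite (toFinite {γ 0, γ 1})
      exact ⟨u, huT, hu, Or.inr hxγ⟩
    · exact ⟨x, hx.resolve_right hxγ, fun h => hxγ (h.elim (fun h => ⟨0, h.symm⟩)
        fun h => ⟨1, (mem_singleton_iff.1 h).symm⟩), Or.inl rfl⟩
  obtain ⟨α, hα, hα₀, hα₁, huα, hαT⟩ := hT h₀ huT h₁ (fun h => hu (Or.inl h.symm))
    (fun h => hu (Or.inr h)) (fun h => zero_ne_one (hγ h))
  refine ⟨range γ ∪ range α, union_subset subset_union_right (hαT.trans subset_union_left),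
    isJordanCurve_range_union_range hγ hα hα₀.symm hα₁.symm
      fun s t heq => hγT s (heq ▸ hαT ⟨t, rfl⟩), ?_, subset_union_left⟩
  exact (insert_subset (Or.inr huα) subset_union_left : insert u (range γ) ⊆ _) hxu

end Arcs

section MaximalCyclic

open unitInterval

variable {X : Type} [TopologicalSpace X] {T : Set X}

theorem MaximalCyclic.nontrivial (hT : MaximalCyclic T) : T.Nontrivial :=
  not_subsingleton_iff.1 hT.1

variable [T2Space X]

theorem MaximalCyclic.range_subset_of_forall_eq_zero_or_one (hT : MaximalCyclic T)
    (harcs : HasArcsThroughTriples T) {γ : C(I, X)} (hγ : Function.Injective γ) (h₀ : γ 0 ∈ T)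
    (h₁ : γ 1 ∈ T) (hγT : ∀ t, γ t ∈ T → t = 0 ∨ t = 1) : range γ ⊆ T := by
  have hinf : T.Infinite := hT.2.1.isPreconnected.infinite_of_nontrivial hT.nontrivial
  have hcyclic : CyclicallyConnected (T ∪ range γ) := by
    rintro x hx y hy
    obtain ⟨J, hJT, hJ, hxJ, hγJ⟩ := harcs.exists_isJordanCurve hinf hγ h₀ h₁ hγT hx
    obtain ⟨K, hKT, hK, hyK, hγK⟩ := harcs.exists_isJordanCurve hinf hγ h₀ h₁ hγT hy
    rcases hx with hxT | hxγ
    · rcases hy with hyT | hyγ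
      · obtain ⟨L, hLT, hL⟩ := hT.2.1 x hxT y hyT
        exact ⟨L, hLT.trans subset_union_left, hL⟩
      · exact ⟨J, hJT, hJ, hxJ, hγJ hyγ⟩
    · exact ⟨K, hKT, hK, hγK hxγ, hyK⟩
  exact union_eq_left.1 (hT.2.2 _ hcyclic subset_union_left)

theorem exists_injective_range_eq_image_Icc {Y : Type*} [TopologicalSpace Y] {γ : C(I, Y)}
    (hγ : Function.Injective γ) {a b : I} (hab : a < b) :
    ∃ δ : C(I, Y), Function.Injective δ ∧ δ 0 = γ a ∧ δ 1 = γ b ∧ range δ = γ '' Icc a b := by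
  let p : Path (γ 0) (γ 1) := ⟨γ, rfl, rfl⟩
  refine ⟨p.subpath a b, hγ.comp fun s t hst => ?_, (p.subpath a b).source,
    (p.subpath a b).target, p.range_subpath_of_le a b hab.le⟩
  rw [Subtype.ext_iff, Icc.coe_convexComb, Icc.coe_convexComb] at hst
  have hba : (b : ℝ) - a ≠ 0 := (sub_pos.2 (show (a : ℝ) < b from hab)).ne'
  exact Subtype.ext (mul_right_cancel₀ hba (by linarith))

theorem MaximalCyclic.range_subset (hT : MaximalCyclic T) (hclosed : IsClosed T)
    (harcs : HasArcsThroughTriples T) {γ : C(I, X)} (hγ : Function.Injective γ) (h₀ : γ 0 ∈ T)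
    (h₁ : γ 1 ∈ T) : range γ ⊆ T := by
  rintro _ ⟨t, rfl⟩
  by_contra ht
  have hK : IsClosed (γ ⁻¹' T) := hclosed.preimage γ.continuous
  obtain ⟨a, ⟨haT, hat⟩, ha⟩ := (hK.inter isClosed_Iic).isCompact.exists_isGreatest
    ⟨0, h₀, (nonneg' : 0 ≤ t)⟩
  obtain ⟨b, ⟨hbT, htb⟩, hb⟩ := (hK.inter isClosed_Ici).isCompact.exists_isLeast
    ⟨1, h₁, (le_one' : t ≤ 1)⟩
  have hat' : a < t := hat.lt_of_ne fun h => ht (h ▸ haT)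
  have htb' : t < b := htb.lt_of_ne fun h => ht (h ▸ hbT)
  obtain ⟨δ, hδ, hδ₀, hδ₁, hrange⟩ := exists_injective_range_eq_image_Icc hγ (hat'.trans htb')
  refine ht (hT.range_subset_of_forall_eq_zero_or_one harcs hδ (hδ₀ ▸ haT) (hδ₁ ▸ hbT)
    (fun s hs => ?_) (hrange ▸ mem_image_of_mem γ ⟨hat, htb⟩))
  obtain ⟨w, hw, hwδ⟩ : δ s ∈ γ '' Icc a b := hrange ▸ mem_range_self s
  have hwT : w ∈ γ ⁻¹' T := mem_preimage.2 (hwδ ▸ hs)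
  rcases le_total w t with hwt | htw
  · have hwa : w = a := (ha ⟨hwT, hwt⟩).antisymm hw.1
    exact Or.inl (hδ (by rw [← hwδ, hδ₀, hwa]))
  · have hwb : w = b := hw.2.antisymm (hb ⟨hwT, htw⟩)
    exact Or.inr (hδ (by rw [← hwδ, hδ₁, hwb]))

theorem MaximalCyclic.inter_subsingleton {T' : Set X} (hT : MaximalCyclic T)
    (hclosed : IsClosed T) (harcs : HasArcsThroughTriples T) (hT' : MaximalCyclic T')
    (harcs' : HasArcsThroughTriples T') (hne : T ≠ T') : (T ∩ T').Subsingleton := by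
  rintro a ⟨ha, ha'⟩ b ⟨hb, hb'⟩
  by_contra hab
  refine hne (hT'.2.2 T hT.2.1 fun u hu => ?_)
  by_cases hau : a = u
  · exact hau ▸ ha
  by_cases hub : u = b
  · exact hub ▸ hb
  obtain ⟨α, hα, h₀, h₁, huα, -⟩ := harcs' ha' hu hb' hau hub hab
  exact hT.range_subset hclosed harcs hα (h₀ ▸ ha) (h₁ ▸ hb) huα

end MaximalCyclic

section Root

open unitInterval

/-- `p` is the root of `T` as seen from `x`: the point through which every connected set containing
`x` enters `T`. -/
structure IsRoot {X : Type*} [TopologicalSpace X] (T : Set X) (x p : X) : Prop where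
  mem : p ∈ T
  mem_of_isPreconnected : ∀ S, IsPreconnected S → x ∈ S → (S ∩ T).Nonempty → p ∈ S
  exists_isPreconnected : x ∈ T ∨
    ∃ C, IsPreconnected C ∧ x ∈ C ∧ Disjoint C T ∧ IsPreconnected (insert p C)

theorem isRoot_self {X : Type*} [TopologicalSpace X] {T : Set X} {x : X} (hx : x ∈ T) :
    IsRoot T x x := ⟨hx, fun _ _ hxS _ => hxS, Or.inl hx⟩

theorem frontier_connectedComponentIn_subset {X : Type*} [TopologicalSpace X]
    [LocallyConnectedSpace X] {U : Set X} (hU : IsOpen U) {x : X} (hx : x ∈ U) :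
    frontier (connectedComponentIn U x) ⊆ Uᶜ := by
  intro y hy hyU
  rw [hU.connectedComponentIn.frontier_eq] at hy
  refine hy.2 ((isPreconnected_connectedComponentIn.subset_closure (subset_insert y _)
    (insert_subset hy.1 subset_closure)).subset_connectedComponentIn
      (Or.inr (mem_connectedComponentIn hx))
      (insert_subset hyU (connectedComponentIn_subset U x)) (Or.inl rfl))

theorem exists_isRoot_of_closure_inter_subsingleton {X : Type*} [TopologicalSpace X]
    [PreconnectedSpace X] [LocallyConnectedSpace X] {T : Set X} (hclosed : IsClosed T)
    (hne : T.Nonempty)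
    (hsub : ∀ C, IsOpen C → IsPreconnected C → Disjoint C T → (closure C ∩ T).Subsingleton)
    (x : X) : ∃ p, IsRoot T x p := by
  by_cases hx : x ∈ T
  · exact ⟨x, isRoot_self hx⟩
  set C := connectedComponentIn Tᶜ x
  have hCopen : IsOpen C := hclosed.isOpen_compl.connectedComponentIn
  have hCconn : IsPreconnected C := isPreconnected_connectedComponentIn
  have hxC : x ∈ C := mem_connectedComponentIn hx
  have hCT : Disjoint C T := disjoint_left.2 (connectedComponentIn_subset Tᶜ x)
  have hfrontier : frontier C ⊆ closure C ∩ T := subset_inter frontier_subset_closure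
    ((frontier_connectedComponentIn_subset hclosed.isOpen_compl hx).trans (compl_compl T).subset)
  have hmeet (S) (hS : IsPreconnected S) (hxS : x ∈ S) (hST : (S ∩ T).Nonempty) :
      (S ∩ frontier C).Nonempty :=
    inter_frontier_nonempty_of_isPreconnected hS hCopen ⟨x, hxS, hxC⟩
      (hST.mono (inter_subset_inter_right S hCT.subset_compl_left))
  obtain ⟨p, -, hp⟩ := hmeet univ isPreconnected_univ (mem_univ x) (by rwa [univ_inter])
  refine ⟨p, (hfrontier hp).2, fun S hS hxS hST => ?_, Or.inr ⟨C, hCconn, hxC, hCT,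
    hCconn.subset_closure (subset_insert p C) (insert_subset (hfrontier hp).1 subset_closure)⟩⟩
  obtain ⟨q, hqS, hq⟩ := hmeet S hS hxS hST
  exact hsub C hCopen hCconn hCT (hfrontier hq) (hfrontier hp) ▸ hqS

theorem exists_injective_of_mem_closure {X : Type*} [MetricSpace X] [LocallyPathConnectedSpace X]
    {C U V : Set X} (hC : IsOpen C) (hCconn : IsPreconnected C) (hU : IsOpen U) (hV : IsOpen V)
    {a b : X} (haC : a ∈ closure C) (hbC : b ∈ closure C) (haU : a ∈ U) (hbV : b ∈ V)
    (hab : a ≠ b) : ∃ γ : C(I, X), Function.Injective γ ∧ γ 0 = a ∧ γ 1 = b ∧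
      range γ ⊆ U ∪ C ∪ V := by
  have haU' := mem_connectedComponentIn haU
  have hbV' := mem_connectedComponentIn hbV
  have hU' : IsOpen (connectedComponentIn U a) := hU.connectedComponentIn
  have hV' : IsOpen (connectedComponentIn V b) := hV.connectedComponentIn
  set U' := connectedComponentIn U a
  set V' := connectedComponentIn V b
  have hconn : IsPreconnected (U' ∪ C ∪ V') :=
    IsPreconnected.union' ((mem_closure_iff.1 hbC V' hV' hbV').mono
        fun z hz => ⟨Or.inr hz.2, hz.1⟩)
      (isPreconnected_connectedComponentIn.union' (mem_closure_iff.1 haC U' hU' haU') hCconn)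
      isPreconnected_connectedComponentIn
  obtain ⟨p, hp⟩ := (((hU'.union hC).union hV').isConnected_iff_isPathConnected.1
    ⟨⟨a, Or.inl (Or.inl haU')⟩, hconn⟩).joinedIn a (Or.inl (Or.inl haU')) b (Or.inr hbV')
  obtain ⟨γ, hγ, h₀, h₁, hrange⟩ := exists_injective_range_subset p.toContinuousMap
    (p.source.trans_ne (hab.trans_eq p.target.symm))
  exact ⟨γ, hγ, h₀.trans p.source, h₁.trans p.target, hrange.trans ((range_subset_iff.2 hp).trans
    (union_subset_union (union_subset_union_left C (connectedComponentIn_subset U a))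
      (connectedComponentIn_subset V b)))⟩

theorem MaximalCyclic.closure_inter_subsingleton {X : Type} [MetricSpace X]
    [LocallyPathConnectedSpace X] {T C : Set X} (hT : MaximalCyclic T) (hclosed : IsClosed T)
    (harcs : HasArcsThroughTriples T) (hC : IsOpen C) (hCconn : IsPreconnected C)
    (hCT : Disjoint C T) : (closure C ∩ T).Subsingleton := by
  rintro a ⟨haC, haT⟩ b ⟨hbC, hbT⟩
  by_contra hab
  obtain ⟨U, V, hU, hV, haU, hbV, hUV⟩ := t2_separation hab
  obtain ⟨γ, hγ, h₀, h₁, hrange⟩ :=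
    exists_injective_of_mem_closure hC hCconn hU hV haC hbC haU hbV hab
  have hγT : range γ ⊆ T := hT.range_subset hclosed harcs hγ (h₀ ▸ haT) (h₁ ▸ hbT)
  have hγUV : range γ ⊆ U ∪ V := fun z hz =>
    (hrange hz).imp_left fun h => h.resolve_right fun hzC => hCT.le_bot ⟨hzC, hγT hz⟩
  obtain ⟨z, -, hz⟩ := isPreconnected_range γ.continuous U V hU hV hγUV ⟨a, ⟨0, h₀⟩, haU⟩
    ⟨b, ⟨1, h₁⟩, hbV⟩
  exact hUV.le_bot hz

theorem MaximalCyclic.exists_isRoot {X : Type} [MetricSpace X] [PreconnectedSpace X]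
    [LocallyPathConnectedSpace X] {T : Set X} (hT : MaximalCyclic T) (hclosed : IsClosed T)
    (harcs : HasArcsThroughTriples T) (x : X) : ∃ p, IsRoot T x p :=
  exists_isRoot_of_closure_inter_subsingleton hclosed hT.nontrivial.nonempty
    (fun _ => hT.closure_inter_subsingleton hclosed harcs) x

variable {X : Type*} [TopologicalSpace X] {T T' : Set X} {x p p' q : X}

theorem IsRoot.eq_of_mem (hp : IsRoot T x p) (hx : x ∈ T) : p = x :=
  hp.mem_of_isPreconnected {x} isPreconnected_singleton rfl ⟨x, rfl, hx⟩

theorem IsRoot.unique (hp : IsRoot T x p) (hp' : IsRoot T x p') : p = p' := by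
  rcases hp.exists_isPreconnected with hx | ⟨C, -, hxC, hCT, hpC⟩
  · rw [hp.eq_of_mem hx, hp'.eq_of_mem hx]
  · rcases hp'.mem_of_isPreconnected _ hpC (Or.inr hxC) ⟨p, Or.inl rfl, hp.mem⟩ with h | h
    · exact h.symm
    · exact (hCT.le_bot ⟨h, hp'.mem⟩).elim

theorem IsRoot.eq_of_mem_inter (hT : IsPreconnected T) (hT' : IsPreconnected T')
    (hsub : (T ∩ T').Subsingleton) (hp : IsRoot T x p) (hp' : IsRoot T' x p') (hq : q ∈ T ∩ T')
    (hqp : q ≠ p) : q = p' := by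
  by_contra hqp'
  have hp'T : p' ∉ T := fun h => hqp' (hsub hq ⟨h, hp'.mem⟩)
  rcases hp.exists_isPreconnected with hx | ⟨C, hC, hxC, hCT, hpC⟩
  · exact hp'T (hp'.mem_of_isPreconnected T hT hx ⟨q, hq⟩)
  · have hp'C : p' ∈ C := by
      rcases hp'.mem_of_isPreconnected _ (hpC.union p (Or.inl rfl) hp.mem hT)
        (Or.inl (Or.inr hxC)) ⟨q, Or.inr hq.1, hq.2⟩ with (h | h) | h
      · exact (hp'T (h ▸ hp.mem)).elim
      · exact h
      · exact (hp'T h).elim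
    rcases hp.mem_of_isPreconnected (C ∪ T') (hC.union p' hp'C hp'.mem hT') (Or.inl hxC)
      ⟨q, Or.inr hq.2, hq.1⟩ with h | h
    · exact hCT.le_bot ⟨h, hp.mem⟩
    · exact hqp (hsub hq ⟨hp.mem, h⟩)

end Root

section Treelike

/-- A family of connected sets, any two of which share at most one point, and each of which has a
root as seen from any point. The maximal cyclic sets of a cactoid form such a family. -/
structure IsTreelike {X : Type*} [TopologicalSpace X] (𝒯 : Set (Set X)) : Prop where
  isPreconnected : ∀ T ∈ 𝒯, IsPreconnected T
  inter_subsingleton : 𝒯.Pairwise fun T T' => (T ∩ T').Subsingleton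
  exists_isRoot : ∀ T ∈ 𝒯, ∀ x, ∃ p, IsRoot T x p

theorem isTreelike_setOf_maximalCyclic {X : Type} [MetricSpace X] [PreconnectedSpace X]
    [LocallyPathConnectedSpace X] (hclosed : ∀ T : Set X, MaximalCyclic T → IsClosed T)
    (harcs : ∀ T : Set X, MaximalCyclic T → HasArcsThroughTriples T) :
    IsTreelike {T : Set X | MaximalCyclic T} where
  isPreconnected _ hT := hT.2.1.isPreconnected
  inter_subsingleton _ hT _ hT' hne :=
    hT.inter_subsingleton (hclosed _ hT) (harcs _ hT) hT' (harcs _ hT') hne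
  exists_isRoot T hT := hT.exists_isRoot (hclosed T hT) (harcs T hT)

theorem IsTreelike.inter_nonempty {X : Type*} [TopologicalSpace X] {𝒯 : Set (Set X)}
    (h𝒯 : IsTreelike 𝒯) {T T' : Set X} (hT : T ∈ 𝒯) (hT' : T' ∈ 𝒯) (hne : T ≠ T') {S R : Set X}
    (hS : IsPreconnected S) (hST : (S ∩ T).Nonempty) (hST' : (S ∩ T').Nonempty)
    (hR : IsPreconnected R) (hRT : (R ∩ T).Nonempty) (hRT' : (R ∩ T').Nonempty) :
    (S ∩ R).Nonempty := by
  have hTconn := h𝒯.isPreconnected T hT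
  obtain ⟨a, haS, haT⟩ := hST
  obtain ⟨b, hbR, hbT⟩ := hRT
  obtain ⟨p, hp⟩ := h𝒯.exists_isRoot T' hT' a
  have hpS : p ∈ S := hp.mem_of_isPreconnected S hS haS hST'
  refine ⟨p, hpS, ?_⟩
  rcases hp.mem_of_isPreconnected (R ∪ T) (hR.union b hbR hbT hTconn) (Or.inr haT)
    (hRT'.mono (inter_subset_inter_left T' subset_union_left)) with hpR | hpT
  · exact hpR
  · obtain ⟨q, hq⟩ := h𝒯.exists_isRoot T' hT' b
    have hqT : q ∈ T := hq.mem_of_isPreconnected T hTconn hbT ⟨p, hpT, hp.mem⟩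
    have hqp : q = p := h𝒯.inter_subsingleton hT hT' hne ⟨hqT, hq.mem⟩ ⟨hpT, hp.mem⟩
    have hqR : q ∈ R := hq.mem_of_isPreconnected R hR hbR hRT'
    exact hqp ▸ hqR

/-- A family of sets of which, for each `ε > 0`, only finitely many contain two points at distance
at least `ε`. -/
def IsNullFamily {X : Type*} [PseudoMetricSpace X] (𝒯 : Set (Set X)) : Prop :=
  ∀ ε > 0, {T ∈ 𝒯 | ∃ a ∈ T, ∃ b ∈ T, ε ≤ dist a b}.Finite

theorem exists_ne_dist_lt_of_infinite {ι Z : Type*} [PseudoMetricSpace Z] [CompactSpace Z]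
    {s : Set ι} (hs : s.Infinite) (f : ι → Z) {δ : ℝ} (hδ : 0 < δ) :
    ∃ i ∈ s, ∃ j ∈ s, i ≠ j ∧ dist (f i) (f j) < δ := by
  obtain ⟨t, -, htfin, ht⟩ := finite_cover_balls_of_compact (isCompact_univ (X := Z))
    (half_pos hδ)
  have hcover (z : Z) : ∃ c ∈ t, dist z c < δ / 2 := by
    simpa only [mem_iUnion, exists_prop, mem_ball] using ht (mem_univ z)
  choose c hct hc using hcover
  obtain ⟨i, hi, j, hj, hne, heq⟩ :=
    hs.exists_ne_map_eq_of_mapsTo (f := fun i => c (f i)) (fun i _ => hct _) htfin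
  refine ⟨i, hi, j, hj, hne, ?_⟩
  have hj' := hc (f j)
  rw [← heq] at hj'
  linarith [hc (f i), dist_triangle_right (f i) (f j) (c (f i))]

-- Two members containing close pairs of distant points would be joined by two small connected
-- sets that are far apart.
theorem IsTreelike.isNullFamily {X : Type*} [PseudoMetricSpace X] [CompactSpace X]
    [LocallyConnectedSpace X] {𝒯 : Set (Set X)} (h𝒯 : IsTreelike 𝒯) : IsNullFamily 𝒯 := by
  intro ε hε
  obtain ⟨δ, hδ, hsmall⟩ := exists_isPreconnected_subset_ball (X := X) (half_pos hε)
  by_contra hinf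
  obtain ⟨-, -, x, -⟩ := Set.Infinite.nonempty hinf
  have : Nonempty X := ⟨x⟩
  choose! a ha b hb hab using fun (T : Set X) (h : ∃ a ∈ T, ∃ b ∈ T, ε ≤ dist a b) => h
  obtain ⟨T, ⟨hT, hlarge⟩, T', ⟨hT', hlarge'⟩, hne, hlt⟩ :=
    exists_ne_dist_lt_of_infinite hinf (fun T => (a T, b T)) hδ
  rw [Prod.dist_eq, max_lt_iff] at hlt
  obtain ⟨S, hS, haS, haS', hSball⟩ := hsmall _ _ hlt.1
  obtain ⟨R, hR, hbR, hbR', hRball⟩ := hsmall _ _ hlt.2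
  obtain ⟨p, hpS, hpR⟩ := h𝒯.inter_nonempty hT hT' hne hS ⟨_, haS, ha T hlarge⟩
    ⟨_, haS', ha T' hlarge'⟩ hR ⟨_, hbR, hb T hlarge⟩ ⟨_, hbR', hb T' hlarge'⟩
  have hap := mem_ball.1 (hSball hpS)
  have hbp := mem_ball.1 (hRball hpR)
  linarith [hab T hlarge, dist_triangle_left (a T) (b T) p]

end Treelike

/-! ### Cactoids -/

section Cactoid

open Filter Topology unitInterval

theorem isFillable_of_isNullFamily {X : Type*} [MetricSpace X] {𝒯 : Set (Set X)} {V : Set X}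
    (h𝒯 : IsNullFamily 𝒯)
    (hloop : ∀ γ : C(I, X), IsJordanLoop γ → (∃ t, γ t ≠ γ 0) → ∃ T ∈ 𝒯, range γ ⊆ T)
    (hV : ∀ T ∈ 𝒯, IsFillable (V ∩ T)) : IsFillable V := by
  have hcases (γ : C(I, X)) (hγ : IsJordanLoop γ) (hγV : range γ ⊆ V) :
      (∀ t, γ t = γ 0) ∨ ∃ T ∈ 𝒯, range γ ⊆ V ∩ T := by
    refine or_iff_not_imp_left.2 fun hne => ?_
    obtain ⟨T, hT, hγT⟩ := hloop γ hγ (not_forall.1 hne)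
    exact ⟨T, hT, subset_inter hγV hγT⟩
  have hconst (γ : C(I, X)) (hγV : range γ ⊆ V) :
      range (ContinuousMap.const (I × I) (γ 0)) ⊆ V := range_subset_iff.2 fun _ => hγV ⟨0, rfl⟩
  refine ⟨fun γ hγ hγV => ?_, fun ε hε => ?_⟩
  · rcases hcases γ hγ hγV with heq | ⟨T, hT, hγT⟩
    · exact ⟨_, isFilling_const heq, hconst γ hγV⟩
    · obtain ⟨H, hH, hHT⟩ := (hV T hT).exists_filling γ hγ hγT
      exact ⟨H, hH, hHT.trans inter_subset_left⟩
  choose! δ hδ hfill using fun T hT => (hV T hT).exists_small_filling ε hε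
  obtain ⟨η, hηδ, hη⟩ := (((eventually_all_finite (h𝒯 ε hε)).2 fun T hT =>
    Ioo_mem_nhdsGT (hδ T hT.1)).and self_mem_nhdsWithin).exists
  refine ⟨η, hη, fun γ hγ hγV hsmall => ?_⟩
  rcases hcases γ hγ hγV with heq | ⟨T, hT, hγT⟩
  · exact ⟨_, isFilling_const heq, hconst γ hγV, fun _ => (dist_self (γ 0)).trans_lt hε⟩
  by_cases hlarge : ∃ a ∈ T, ∃ b ∈ T, ε ≤ dist a b
  · obtain ⟨H, hH, hHT, hHε⟩ :=
      hfill T hT γ hγ hγT fun t => (hsmall t).trans (hηδ T ⟨hT, hlarge⟩).2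
    exact ⟨H, hH, hHT.trans inter_subset_left, hHε⟩
  · push Not at hlarge
    obtain ⟨H, hH, hHT⟩ := (hV T hT).exists_filling γ hγ hγT
    exact ⟨H, hH, hHT.trans inter_subset_left, fun z =>
      hlarge _ (hHT ⟨z, rfl⟩).2 _ (hγT ⟨0, rfl⟩).2⟩

/-- `E` cuts each member `T` of `𝒯` down to a fillable region inside `B`, leaving `T` as it is
if `T ⊆ B` and keeping the root of `T` as seen from `x` if this root is in `B`. -/
structure IsTrimming {X : Type*} [MetricSpace X] (𝒯 : Set (Set X)) (x : X) (B : Set X)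
    (E : Set X → Set X) : Prop where
  isFillableRegion : ∀ T ∈ 𝒯, IsFillableRegion T (E T)
  subset : ∀ T ∈ 𝒯, E T ⊆ B
  eq_self : ∀ T ∈ 𝒯, T ⊆ B → E T = T
  root_mem : ∀ T ∈ 𝒯, ∀ p ∈ B, IsRoot T x p → p ∈ E T

theorem exists_isTrimming {X : Type*} [MetricSpace X] {𝒯 : Set (Set X)}
    (h𝒯 : ∀ T ∈ 𝒯, IsTopologicalSphere T) (x : X) {B : Set X} (hB : IsOpen B) :
    ∃ E, IsTrimming 𝒯 x B E := by
  have htrim (T) (hT : T ∈ 𝒯) : ∃ D, IsFillableRegion T D ∧ D ⊆ B ∧ (T ⊆ B → D = T) ∧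
      ∀ p ∈ B, IsRoot T x p → p ∈ D := by
    by_cases hTB : T ⊆ B
    · exact ⟨T, (h𝒯 T hT).isFillableRegion, hTB, fun _ => rfl, fun _ _ hp => hp.mem⟩
    by_cases hroot : ∃ p ∈ B, IsRoot T x p
    · obtain ⟨p, hpB, hp⟩ := hroot
      obtain ⟨D, hD, hpD, hDB⟩ := (h𝒯 T hT).exists_isFillableRegion hp.mem hB hpB
      exact ⟨D, hD, hDB, fun h => (hTB h).elim, fun q _ hq => hp.unique hq ▸ hpD⟩
    · exact ⟨∅, .empty T, empty_subset B, fun h => (hTB h).elim,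
        fun p hpB hp => (hroot ⟨p, hpB, hp⟩).elim⟩
  choose! E hE using htrim
  exact ⟨E, fun T hT => (hE T hT).1, fun T hT => (hE T hT).2.1, fun T hT => (hE T hT).2.2.1,
    fun T hT => (hE T hT).2.2.2⟩

/-- What is left of `B` when each member `T` of `𝒯` is replaced by `E T`. -/
def trimmed {X : Type*} (𝒯 : Set (Set X)) (B : Set X) (E : Set X → Set X) : Set X :=
  {y ∈ B | ∀ T ∈ 𝒯, y ∈ T → y ∈ E T}

namespace IsTrimming

variable {X : Type*} [MetricSpace X] {𝒯 : Set (Set X)} {x : X} {B : Set X} {E : Set X → Set X}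

theorem mem_trimmed (hE : IsTrimming 𝒯 x B E) (hx : x ∈ B) : x ∈ trimmed 𝒯 B E :=
  ⟨hx, fun T hT hxT => hE.root_mem T hT x hx (isRoot_self hxT)⟩

theorem eventually_mem_imp_mem (hE : IsTrimming 𝒯 x B E) {T : Set X} (hT : T ∈ 𝒯)
    (hclosed : IsClosed T) {y : X} (hy : y ∈ trimmed 𝒯 B E) : ∀ᶠ z in 𝓝 y, z ∈ T → z ∈ E T := by
  obtain ⟨O, hO, hTO⟩ := (hE.isFillableRegion T hT).exists_isOpen
  by_cases hyT : y ∈ T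
  · have hyO : y ∈ O := (hTO.superset (hy.2 T hT hyT)).2
    filter_upwards [hO.mem_nhds hyO] with z hzO hzT
    exact hTO.subset ⟨hzT, hzO⟩
  · filter_upwards [hclosed.isOpen_compl.mem_nhds hyT] with z hz hzT
    exact (hz hzT).elim

theorem isOpen_trimmed (hE : IsTrimming 𝒯 x B E) (h𝒯 : IsNullFamily 𝒯)
    (hclosed : ∀ T ∈ 𝒯, IsClosed T) (hB : IsOpen B) : IsOpen (trimmed 𝒯 B E) := by
  refine isOpen_iff_mem_nhds.2 fun y hy => ?_
  obtain ⟨ρ, hρ, hρB⟩ := Metric.isOpen_iff.1 hB y hy.1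
  have hlarge := (eventually_all_finite (h𝒯 (ρ / 2) (half_pos hρ))).2
    fun T hT => hE.eventually_mem_imp_mem hT.1 (hclosed T hT.1) hy
  filter_upwards [hlarge, ball_mem_nhds y (half_pos hρ)] with z hz hzy
  refine ⟨hρB (ball_subset_ball (half_le_self hρ.le) hzy), fun T hT hzT => ?_⟩
  by_cases hTlarge : ∃ a ∈ T, ∃ b ∈ T, ρ / 2 ≤ dist a b
  · exact hz T ⟨hT, hTlarge⟩ hzT
  · push Not at hTlarge
    have hTB : T ⊆ B := fun w hw => hρB <| mem_ball.2 <| by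
      linarith [hTlarge w hw z hzT, mem_ball.1 hzy, dist_triangle w z y]
    exact (hE.eq_self T hT hTB).superset hzT

theorem subset_trimmed (hE : IsTrimming 𝒯 x B E) (h𝒯 : IsTreelike 𝒯) {T : Set X} (hT : T ∈ 𝒯)
    {p : X} (hp : IsRoot T x p) (hpV : p ∈ trimmed 𝒯 B E) : E T ⊆ trimmed 𝒯 B E := by
  intro y hy
  have hyT : y ∈ T := (hE.isFillableRegion T hT).subset hy
  have hyB : y ∈ B := hE.subset T hT hy
  refine ⟨hyB, fun T' hT' hyT' => ?_⟩
  by_cases hne : T = T'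
  · exact hne ▸ hy
  by_cases hyp : y = p
  · exact hyp ▸ hpV.2 T' hT' (hyp ▸ hyT')
  · obtain ⟨p', hp'⟩ := h𝒯.exists_isRoot T' hT' x
    obtain rfl : y = p' := hp.eq_of_mem_inter (h𝒯.isPreconnected T hT) (h𝒯.isPreconnected T' hT')
      (h𝒯.inter_subsingleton hT hT' hne) hp' ⟨hyT, hyT'⟩ hyp
    exact hE.root_mem T' hT' y hyB hp'

theorem isFillable_connectedComponentIn_inter (hE : IsTrimming 𝒯 x B E) (h𝒯 : IsTreelike 𝒯)
    (hx : x ∈ B) {T : Set X} (hT : T ∈ 𝒯) :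
    IsFillable (connectedComponentIn (trimmed 𝒯 B E) x ∩ T) := by
  set V := connectedComponentIn (trimmed 𝒯 B E) x with hV
  have hVsub : V ⊆ trimmed 𝒯 B E := connectedComponentIn_subset _ x
  rcases (V ∩ T).eq_empty_or_nonempty with hempty | hne
  · exact hempty ▸ isFillable_empty
  obtain ⟨p, hp⟩ := h𝒯.exists_isRoot T hT x
  have hpV : p ∈ V := hp.mem_of_isPreconnected V isPreconnected_connectedComponentIn
    (mem_connectedComponentIn (hE.mem_trimmed hx)) hne
  have hregion := hE.isFillableRegion T hT
  have hEV : E T ⊆ V := by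
    rw [hV, connectedComponentIn_eq hpV]
    exact hregion.isPreconnected.subset_connectedComponentIn
      (hE.root_mem T hT p (hVsub hpV).1 hp) (hE.subset_trimmed h𝒯 hT hp (hVsub hpV))
  have heq : V ∩ T = E T := Subset.antisymm (fun y hy => (hVsub hy.1).2 T hT hy.2)
    (subset_inter hEV hregion.subset)
  exact heq ▸ hregion.isFillable

end IsTrimming

variable {X : Type*} [MetricSpace X] {𝒯 : Set (Set X)}

theorem exists_isOpen_isSimplyConnected_subset [LocallyPathConnectedSpace X]
    (h𝒯 : IsTreelike 𝒯) (hnull : IsNullFamily 𝒯) (hsphere : ∀ T ∈ 𝒯, IsTopologicalSphere T)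
    (hloop : ∀ γ : C(I, X), IsJordanLoop γ → (∃ t, γ t ≠ γ 0) → ∃ T ∈ 𝒯, range γ ⊆ T)
    {x : X} {B : Set X} (hB : IsOpen B) (hx : x ∈ B) :
    ∃ V ⊆ B, IsOpen V ∧ x ∈ V ∧ IsSimplyConnected V := by
  obtain ⟨E, hE⟩ := exists_isTrimming hsphere x hB
  have hopen : IsOpen (trimmed 𝒯 B E) :=
    hE.isOpen_trimmed hnull (fun T hT => (hsphere T hT).isClosed) hB
  have hconn : IsConnected (connectedComponentIn (trimmed 𝒯 B E) x) :=
    isConnected_connectedComponentIn_iff.2 (hE.mem_trimmed hx)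
  have hfill : IsFillable (connectedComponentIn (trimmed 𝒯 B E) x) :=
    isFillable_of_isNullFamily hnull hloop
      fun _ => hE.isFillable_connectedComponentIn_inter h𝒯 hx
  exact ⟨_, (connectedComponentIn_subset _ x).trans (sep_subset B _), hopen.connectedComponentIn,
    mem_connectedComponentIn (hE.mem_trimmed hx),
    hfill.isSimplyConnected (hopen.connectedComponentIn.isConnected_iff_isPathConnected.1 hconn)⟩

theorem simplyConnectedSpace_of_isNullFamily [PathConnectedSpace X] (hnull : IsNullFamily 𝒯)
    (hsphere : ∀ T ∈ 𝒯, IsTopologicalSphere T)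
    (hloop : ∀ γ : C(I, X), IsJordanLoop γ → (∃ t, γ t ≠ γ 0) → ∃ T ∈ 𝒯, range γ ⊆ T) :
    SimplyConnectedSpace X := by
  have hfill : IsFillable (univ : Set X) := isFillable_of_isNullFamily hnull hloop fun T hT =>
    (univ_inter T).symm ▸ (hsphere T hT).isFillableRegion.isFillable
  have : SimplyConnectedSpace (univ : Set X) :=
    hfill.isSimplyConnected (pathConnectedSpace_iff_univ.1 inferInstance)
  exact (Homeomorph.Set.univ X).symm.toHomotopyEquiv.simplyConnectedSpace

end Cactoid

theorem cactoid_simplyConnected_locSimplyConnected_general (X : Type) [MetricSpace X]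
    [CompactSpace X] [ConnectedSpace X] [LocallyConnectedSpace X]
    (hc : ∀ T : Set X, MaximalCyclic T → IsTopologicalSphere T) :
    SimplyConnectedSpace X ∧ LocSimplyConnected X := by
  have : LocallyPathConnectedSpace X := locallyPathConnectedSpace_of_compactSpace X
  have : PathConnectedSpace X := pathConnectedSpace_iff_connectedSpace.2 inferInstance
  have htree : IsTreelike {T : Set X | MaximalCyclic T} :=
    isTreelike_setOf_maximalCyclic (fun T hT => (hc T hT).isClosed)
      fun T hT => (hc T hT).hasArcsThroughTriples
  have hnull : IsNullFamily {T : Set X | MaximalCyclic T} := htree.isNullFamily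
  have hloop (γ : C(unitInterval, X)) (hγ : IsJordanLoop γ) (hne : ∃ t, γ t ≠ γ 0) :
      ∃ T ∈ {T : Set X | MaximalCyclic T}, range γ ⊆ T :=
    (hγ.isJordanCurve_range hne).exists_maximalCyclic
  refine ⟨simplyConnectedSpace_of_isNullFamily hnull hc hloop, fun x U hU => ?_⟩
  obtain ⟨B, hBU, hB, hxB⟩ := _root_.mem_nhds_iff.1 hU
  obtain ⟨V, hVB, hV, hxV, hVsc⟩ :=
    exists_isOpen_isSimplyConnected_subset htree hnull hc hloop hB hxB
  exact ⟨V, hV.mem_nhds hxV, hVB.trans hBU, hV, hVsc⟩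

/-- Every cactoid (a Peano space all of whose maximal cyclic subsets are 2-spheres)
is simply connected and locally simply connected. -/
theorem cactoid_simplyConnected_locSimplyConnected
    (X : Type) [MetricSpace X] [CompactSpace X] [ConnectedSpace X] [LocallyConnectedSpace X]
    (hc : ∀ T : Set X, MaximalCyclic T → IsTopological2Sphere ↥T) :
    SimplyConnectedSpace X ∧ LocSimplyConnected X :=
  cactoid_simplyConnected_locSimplyConnected_general X fun T hT => ⟨2, le_rfl, hc T hT⟩
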